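/- arXiv:1112.4346 — 7 statements merged into one kernel-verified Lean document; each statement's English description precedes it below -/
import Mathlib

section
/- Let p, q ∈ [1, ∞) and C > 0. Let D be a linear subspace of the space of measurable functions ℝ → ℂ, and let (T_j)_{j ∈ ℕ} be linear maps from D to measurable functions ℝ → ℂ satisfying the weak p–q Stepanov bound: for every g ∈ D and every λ > 0, sup_{x ∈ ℝ} |{s ∈ [x, x+1] : sup_{j ∈ ℕ} |T_j g(s)| > λ}| ≤ C (‖g‖_{S^p} / λ)^q. Suppose f ∈ D and (f_n)_{n ∈ ℕ} ⊆ D satisfy ‖f_n − f‖_{S^p} → 0 as n → ∞, and for each n, T_j f_n(x) → f_n(x) as j → ∞ for almost every x ∈ ℝ. Then T_j f(x) → f(x) as j → ∞ for almost every x ∈ ℝ. -/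
open MeasureTheory Filter

/-- The Stepanov `S^p` "norm" of a function `f : ℝ → ℂ`, valued in `ℝ≥0∞`:
`‖f‖_{S^p} = (sup_{x ∈ ℝ} ∫_x^{x+1} |f(s)|^p ds)^{1/p}`. -/
noncomputable def stepanov (p : ℝ) (f : ℝ → ℂ) : ENNReal :=
  (⨆ x : ℝ, ∫⁻ s in Set.Ioc x (x + 1), (‖f s‖₊ : ENNReal) ^ p) ^ (1 / p)

theorem stepanov_cheb (p : ℝ) (hp : 1 ≤ p) (g : ℝ → ℂ) (hg : Measurable g) (e : ℝ) (he : 0 < e)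
    (x : ℝ) : volume {s ∈ Set.Ioc x (x + 1) | ENNReal.ofReal e ≤ (‖g s‖₊ : ENNReal)}
      ≤ (stepanov p g / ENNReal.ofReal e) ^ p := by
  have hp0 : 0 < p := by linarith
  have h1 : stepanov p g ^ p
      = ⨆ x : ℝ, ∫⁻ s in Set.Ioc x (x + 1), (‖g s‖₊ : ENNReal) ^ p := by
    unfold stepanov
    rw [← ENNReal.rpow_mul, one_div, inv_mul_cancel₀ hp0.ne', ENNReal.rpow_one]
  rw [ENNReal.div_rpow_of_nonneg _ _ hp0.le, h1]
  have hm : Measurable (fun s => (‖g s‖₊ : ENNReal) ^ p) := by fun_prop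
  have h2 := meas_ge_le_lintegral_div (μ := volume.restrict (Set.Ioc x (x + 1)))
    hm.aemeasurable (ε := ENNReal.ofReal e ^ p)
    (by simp [ENNReal.rpow_eq_zero_iff, he, hp0.le])
    (ENNReal.rpow_ne_top_of_nonneg hp0.le ENNReal.ofReal_ne_top)
  have h3 : volume {s ∈ Set.Ioc x (x + 1) | ENNReal.ofReal e ≤ (‖g s‖₊ : ENNReal)}
      ≤ (volume.restrict (Set.Ioc x (x + 1)))
        {s | ENNReal.ofReal e ^ p ≤ (‖g s‖₊ : ENNReal) ^ p} := by
    rw [Measure.restrict_apply' measurableSet_Ioc]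
    apply measure_mono
    rintro s ⟨hs, h⟩
    exact ⟨ENNReal.rpow_le_rpow h hp0.le, hs⟩
  refine h3.trans (h2.trans ?_)
  gcongr
  exact le_iSup (fun x : ℝ => ∫⁻ s in Set.Ioc x (x + 1), (‖g s‖₊ : ENNReal) ^ p) x

theorem stmt_0 (p q C : ℝ) (hp : 1 ≤ p) (hq : 1 ≤ q) (hC : 0 < C)
    (D : Submodule ℂ (ℝ → ℂ)) (hD : ∀ g ∈ D, Measurable g)
    (T : ℕ → (D →ₗ[ℂ] (ℝ → ℂ)))
    (hTmeas : ∀ (j : ℕ) (g : D), Measurable (T j g))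
    (hweak : ∀ (g : D) (lam : ℝ), 0 < lam → ∀ x : ℝ,
      volume {s ∈ Set.Icc x (x + 1) |
          ENNReal.ofReal lam < ⨆ j : ℕ, (‖T j g s‖₊ : ENNReal)}
        ≤ ENNReal.ofReal C * (stepanov p (g : ℝ → ℂ) / ENNReal.ofReal lam) ^ q)
    (f : D) (fn : ℕ → D)
    (hconv : Tendsto (fun n => stepanov p ((fn n : ℝ → ℂ) - (f : ℝ → ℂ)))
      atTop (nhds 0))
    (hae : ∀ n : ℕ, ∀ᵐ x : ℝ,
      Tendsto (fun j => T j (fn n) x) atTop (nhds ((fn n : ℝ → ℂ) x))) :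
    ∀ᵐ x : ℝ, Tendsto (fun j => T j f x) atTop (nhds ((f : ℝ → ℂ) x)) := by
  have hlim : ∀ (e r : ℝ), 0 < e → 0 < r → Tendsto (fun n =>
      (stepanov p ((fn n : ℝ → ℂ) - (f : ℝ → ℂ)) / ENNReal.ofReal e) ^ r) atTop (nhds 0) := by
    intro e r he hr
    have h1 := ENNReal.Tendsto.div_const hconv (b := ENNReal.ofReal e)
      (Or.inr (by simp [he]))
    have h2 := h1.ennrpow_const r
    simpa [ENNReal.zero_rpow_of_pos hr] using h2
  have key : ∀ (e : ℝ), 0 < e → ∀ x : ℝ, volume {s ∈ Set.Ioc x (x + 1) |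
      ¬ ∀ᶠ j in atTop, ‖T j f s - (f : ℝ → ℂ) s‖ < 3 * e} = 0 := by
    intro e he x
    have hb : ∀ n, volume {s ∈ Set.Ioc x (x + 1) |
        ¬ ∀ᶠ j in atTop, ‖T j f s - (f : ℝ → ℂ) s‖ < 3 * e} ≤
        ENNReal.ofReal C *
          (stepanov p ((fn n : ℝ → ℂ) - (f : ℝ → ℂ)) / ENNReal.ofReal e) ^ q +
          (stepanov p ((fn n : ℝ → ℂ) - (f : ℝ → ℂ)) / ENNReal.ofReal e) ^ p := by
      intro n
      have hw := hweak (fn n - f) e he x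
      have hc := stepanov_cheb p hp ((fn n : ℝ → ℂ) - (f : ℝ → ℂ))
        ((hD _ (fn n).2).sub (hD _ f.2)) e he x
      have hz : volume {s | ¬ Tendsto (fun j => T j (fn n) s) atTop
        (nhds ((fn n : ℝ → ℂ) s))} = 0 := hae n
      refine le_trans ?_ (add_le_add hw hc)
      rw [← add_zero (volume _ + volume _), ← hz]
      refine le_trans ?_ (add_le_add (measure_union_le _ _) le_rfl)
      refine le_trans ?_ (measure_union_le _ _)
      apply measure_mono
      rintro s ⟨hs, hbad⟩
      by_contra hcon
      apply hbad
      simp only [Set.mem_union, Set.mem_setOf_eq, not_or, not_and, not_lt, not_le, not_not] at hcon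
      obtain ⟨⟨ha, hb⟩, ht⟩ := hcon
      have ha := ha (Set.Ioc_subset_Icc_self hs)
      have hb := hb hs
      have hb' : ‖(fn n : ℝ → ℂ) s - (f : ℝ → ℂ) s‖ < e := by
        rw [← enorm_eq_nnnorm, ← ofReal_norm_eq_enorm, ENNReal.ofReal_lt_ofReal_iff he] at hb
        exact hb
      have ht' := Metric.tendsto_nhds.1 ht e he
      filter_upwards [ht'] with j hj
      have ha' : ‖T j (fn n) s - T j f s‖ ≤ e := by
        have h := (le_iSup (fun j => (‖T j (fn n - f) s‖₊ : ENNReal)) j).trans ha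
        rw [← enorm_eq_nnnorm, ← ofReal_norm_eq_enorm, ENNReal.ofReal_le_ofReal_iff he.le,
          map_sub] at h
        exact h
      rw [dist_eq_norm] at hj
      have e1 : T j f s - (f : ℝ → ℂ) s = -(T j (fn n) s - T j f s)
        + (T j (fn n) s - (fn n : ℝ → ℂ) s) + ((fn n : ℝ → ℂ) s - (f : ℝ → ℂ) s) := by ring
      rw [e1]
      have := norm_add₃_le (a := -(T j (fn n) s - T j f s))
        (b := (T j (fn n) s - (fn n : ℝ → ℂ) s)) (c := ((fn n : ℝ → ℂ) s - (f : ℝ → ℂ) s))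
      rw [norm_neg] at this
      linarith
    have hl := (ENNReal.Tendsto.const_mul (a := ENNReal.ofReal C) (hlim e q he (by linarith))
      (Or.inr ENNReal.ofReal_ne_top)).add (hlim e p he (by linarith))
    rw [mul_zero, add_zero] at hl
    exact le_antisymm (ge_of_tendsto' hl hb) bot_le
  have hall : ∀ᵐ s : ℝ, ∀ (m : ℤ) (k : ℕ), ¬ (s ∈ Set.Ioc (m : ℝ) (m + 1) ∧
      ¬ ∀ᶠ j in atTop, ‖T j f s - (f : ℝ → ℂ) s‖ < 3 * (1 / ((k : ℝ) + 1))) := by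
    rw [ae_all_iff]
    intro m
    rw [ae_all_iff]
    intro k
    rw [ae_iff]
    simp only [not_not]
    exact key _ (by positivity) _
  filter_upwards [hall] with s hs
  rw [Metric.tendsto_nhds]
  intro e he
  obtain ⟨k, hk⟩ := exists_nat_one_div_lt (show 0 < e / 3 by positivity)
  have h := hs (⌈s⌉ - 1) k
  rw [not_and, not_not] at h
  have h' := h (by
    have h1 := Int.le_ceil s
    have h2 := Int.ceil_lt_add_one s
    push_cast
    constructor <;> linarith)
  filter_upwards [h'] with j hj
  rw [dist_eq_norm]
  linarith
end

section
/- Let α > 0 and let (λ_k)_{k ∈ ℤ} be a strictly increasing sequence of real numbers with λ_{k+1} − λ_k > α for all k ∈ ℤ. Then for every (a_j)_{j ∈ ℤ} ∈ ℓ²(ℤ; ℂ), the series (T a)_j := Σ_{k ∈ ℤ, k ≠ j} a_k / (λ_j − λ_k) converges absolutely for each j ∈ ℤ, the resulting sequence (T a)_j lies in ℓ²(ℤ; ℂ), and ‖(T a)_j‖_{ℓ²} ≤ (π/α) ‖(a_j)‖_{ℓ²}. -/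
open Finset Filter Topology in
theorem hs_eigen {ι : Type*} [Fintype ι] [DecidableEq ι] (x : ι → ℝ)
    (hx : Function.Injective x) (B : ℝ) (hB : ∀ k, ∑ j, ((x j - x k)⁻¹) ^ 2 ≤ B)
    (u : ι → ℂ) (c : ℂ) (hc : (starRingEnd ℂ) c = -c)
    (hu : ∀ j, ∑ k, (((x j - x k)⁻¹ : ℝ) : ℂ) * u k = c * u j) :
    ∑ j, ‖c * u j‖ ^ 2 ≤ 3 * B * ∑ j, ‖u j‖ ^ 2 := by
  obtain ⟨w, hw⟩ : ∃ w : ι → ι → ℝ, w = fun j k => (x j - x k)⁻¹ := ⟨_, rfl⟩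
  have hw' : ∀ j k, (x j - x k)⁻¹ = w j k := fun j k => by rw [hw]
  simp only [hw'] at hB hu
  have wanti : ∀ j k, w j k = - w k j := fun j k => by
    rw [← hw', ← hw', ← inv_neg, neg_sub]
  have wself : ∀ k, w k k = 0 := fun k => by rw [← hw']; simp
  have key : ∀ j k l, w j k * w j l = w k l * (w j k - w j l) + (if j = k then w k l ^ 2 else 0)
      + (if j = l then w k l ^ 2 else 0) + (if k = l then w j k ^ 2 else 0) := by
    intro j k l
    by_cases hkl : k = l
    · subst hkl; simp [wself]; ring
    by_cases hjk : j = k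
    · subst hjk; simp [wself, hkl]; ring
    by_cases hjl : j = l
    · subst hjl; simp [wself, hkl, hjk]; rw [wanti k j]; ring
    · simp only [hkl, hjk, hjl, if_false, add_zero]
      rw [← hw', ← hw', ← hw']
      have h1 : x j - x k ≠ 0 := sub_ne_zero.2 fun h => hjk (hx h)
      have h2 : x j - x l ≠ 0 := sub_ne_zero.2 fun h => hjl (hx h)
      have h3 : x k - x l ≠ 0 := sub_ne_zero.2 fun h => hkl (hx h)
      field_simp
      ring
  obtain ⟨S, hS⟩ : ∃ S : ι → ℝ, S = fun k => ∑ j, w j k := ⟨_, rfl⟩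
  obtain ⟨Q, hQ⟩ : ∃ Q : ι → ℝ, Q = fun k => ∑ j, w j k ^ 2 := ⟨_, rfl⟩
  have G : ∀ k l, ∑ j, w j k * w j l
      = w k l * S k - w k l * S l + 2 * w k l ^ 2 + (if k = l then Q k else 0) := by
    intro k l
    simp_rw [key _ k l]
    simp only [sum_add_distrib, ← mul_sum, sum_sub_distrib, sum_ite_eq', mem_univ, if_true, hS, hQ]
    by_cases hkl : k = l
    · simp [hkl]; ring
    · simp [hkl]; ring
  have hu' : ∀ j, ∑ k, (w j k : ℂ) * (starRingEnd ℂ) (u k) = -c * (starRingEnd ℂ) (u j) := by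
    intro j
    have := congrArg (starRingEnd ℂ) (hu j)
    simpa [map_sum, hc] using this
  have E : ((∑ j, ‖c * u j‖ ^ 2 : ℝ) : ℂ)
      = ((∑ k, Q k * ‖u k‖ ^ 2 : ℝ) : ℂ)
        + ∑ k, ∑ l, 2 * ((w k l ^ 2 : ℝ) : ℂ) * (u k * (starRingEnd ℂ) (u l)) := by
    have e1 : ((∑ j, ‖c * u j‖ ^ 2 : ℝ) : ℂ)
        = ∑ k, ∑ l, ((∑ j, w j k * w j l : ℝ) : ℂ) * (u k * (starRingEnd ℂ) (u l)) := by
      push_cast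
      simp_rw [← Complex.mul_conj', map_mul, hc, ← hu', ← hu, sum_mul_sum, sum_mul]
      rw [sum_comm]
      refine sum_congr rfl fun k _ => ?_
      rw [sum_comm]
      refine sum_congr rfl fun l _ => sum_congr rfl fun j _ => by ring
    rw [e1]
    simp_rw [G]
    have e2 : ∀ k l, ((w k l * S k - w k l * S l + 2 * w k l ^ 2 + (if k = l then Q k else 0) : ℝ) : ℂ)
         * (u k * (starRingEnd ℂ) (u l))
        = (S k * u k) * ((w k l : ℂ) * (starRingEnd ℂ) (u l))
          + (S l * (starRingEnd ℂ) (u l)) * ((w l k : ℂ) * u k)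
          + 2 * ((w k l ^ 2 : ℝ) : ℂ) * (u k * (starRingEnd ℂ) (u l))
          + (if k = l then (Q k : ℂ) * (u k * (starRingEnd ℂ) (u l)) else 0) := by
      intro k l
      rw [wanti l k]
      split_ifs <;> push_cast <;> ring
    simp_rw [e2, sum_add_distrib]
    have e3 : ∑ k, ∑ l, (S k * u k) * ((w k l : ℂ) * (starRingEnd ℂ) (u l))
        = - ∑ k, c * S k * (u k * (starRingEnd ℂ) (u k)) := by
      simp_rw [← mul_sum, hu', ← sum_neg_distrib]
      exact sum_congr rfl fun k _ => by ring
    have e4 : ∑ k, ∑ l, (S l * (starRingEnd ℂ) (u l)) * ((w l k : ℂ) * u k)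
        = ∑ k, c * S k * (u k * (starRingEnd ℂ) (u k)) := by
      rw [sum_comm]
      simp_rw [← mul_sum, hu]
      exact sum_congr rfl fun k _ => by ring
    rw [e3, e4]
    simp only [sum_ite_eq, mem_univ, if_true, Complex.mul_conj']
    push_cast
    ring
  have QB : ∀ k, Q k ≤ B := fun k => by rw [hQ]; exact hB k
  have QB' : ∀ k, ∑ l, w k l ^ 2 ≤ B := fun k => by
    refine le_trans (le_of_eq (sum_congr rfl fun l _ => ?_)) (hB k)
    rw [wanti]; ring
  have Ere := congrArg Complex.re E
  rw [Complex.add_re, Complex.ofReal_re, Complex.ofReal_re] at Ere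
  rw [Ere]
  have b1 : ∑ k, Q k * ‖u k‖ ^ 2 ≤ B * ∑ k, ‖u k‖ ^ 2 := by
    rw [mul_sum]
    exact sum_le_sum fun k _ => mul_le_mul_of_nonneg_right (QB k) (by positivity)
  have b2 : (∑ k, ∑ l, 2 * ((w k l ^ 2 : ℝ) : ℂ) * (u k * (starRingEnd ℂ) (u l))).re
      ≤ ∑ k, ∑ l, (w k l ^ 2 * ‖u k‖ ^ 2 + w k l ^ 2 * ‖u l‖ ^ 2) := by
    simp only [Complex.re_sum]
    refine sum_le_sum fun k _ => sum_le_sum fun l _ => ?_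
    refine (Complex.re_le_norm _).trans ?_
    simp only [norm_mul, Complex.norm_real, RCLike.norm_conj, Complex.norm_ofNat, Real.norm_eq_abs,
      abs_of_nonneg (sq_nonneg (w k l))]
    nlinarith [mul_nonneg (sq_nonneg (w k l)) (sq_nonneg (‖u k‖ - ‖u l‖))]
  have b3 : ∑ k, ∑ l, (w k l ^ 2 * ‖u k‖ ^ 2 + w k l ^ 2 * ‖u l‖ ^ 2) ≤ 2 * B * ∑ k, ‖u k‖ ^ 2 := by
    simp only [sum_add_distrib]
    rw [sum_comm (f := fun k l => w k l ^ 2 * ‖u l‖ ^ 2)]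
    simp only [← sum_mul]
    rw [two_mul, add_mul, mul_sum]
    exact add_le_add
      (sum_le_sum fun k _ => mul_le_mul_of_nonneg_right (QB' k) (by positivity))
      (sum_le_sum fun k _ => mul_le_mul_of_nonneg_right (hB k) (by positivity))
  linarith

open Finset in
theorem hs_finite {ι : Type*} [Fintype ι] [DecidableEq ι] (x : ι → ℝ)
    (hx : Function.Injective x) (B : ℝ) (hB : ∀ k, ∑ j, ((x j - x k)⁻¹) ^ 2 ≤ B)
    (a : ι → ℂ) :
    ∑ j, ‖∑ k, (((x j - x k)⁻¹ : ℝ) : ℂ) * a k‖ ^ 2 ≤ 3 * B * ∑ j, ‖a j‖ ^ 2 := by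
  let M : Matrix ι ι ℂ := fun j k => Complex.I * (((x j - x k)⁻¹ : ℝ) : ℂ)
  have hM : M.IsHermitian := by
    ext j k
    rw [Matrix.conjTranspose_apply]
    change star (Complex.I * (((x k - x j)⁻¹ : ℝ) : ℂ)) = Complex.I * (((x j - x k)⁻¹ : ℝ) : ℂ)
    simp only [star_mul', RCLike.star_def, Complex.conj_I, Complex.conj_ofReal]
    rw [← neg_sub (x j) (x k), inv_neg]
    push_cast
    ring
  have hsymm := Matrix.isHermitian_iff_isSymmetric.1 hM
  let b := hM.eigenvectorBasis
  have hmv : ∀ (v : ι → ℂ) j, (M.mulVec v) j = Complex.I * ∑ k, (((x j - x k)⁻¹ : ℝ) : ℂ) * v k := by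
    intro v j
    simp only [M, Matrix.mulVec, dotProduct, mul_sum, mul_assoc]
  have hb : ∀ i, Matrix.toEuclideanLin M (b i) = (hM.eigenvalues i : ℂ) • b i := by
    intro i
    ext j
    have := congrFun (hM.mulVec_eigenvectorBasis i) j
    simpa [Matrix.toEuclideanLin_apply] using this
  have hbd : ∀ i, hM.eigenvalues i ^ 2 ≤ 3 * B := by
    intro i
    have h := hs_eigen x hx B hB (fun j => b i j) (-Complex.I * hM.eigenvalues i) (by simp) (by
      intro j
      have h1 := congrFun (hM.mulVec_eigenvectorBasis i) j
      rw [hmv] at h1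
      have h2 : Complex.I * ∑ k, (((x j - x k)⁻¹ : ℝ) : ℂ) * (b i k) = hM.eigenvalues i * b i j := by
        simpa using h1
      linear_combination (-Complex.I) * h2 + (∑ k, (((x j - x k)⁻¹ : ℝ) : ℂ) * (b i k)) * Complex.I_sq)
    have hn : ∑ j, ‖b i j‖ ^ 2 = 1 := by
      rw [← EuclideanSpace.norm_sq_eq, b.orthonormal.1 i]; norm_num
    simp only [norm_mul, mul_pow, ← mul_sum, hn] at h
    simpa using h
  let y : EuclideanSpace ℂ ι := WithLp.toLp 2 a
  have h1 : ∑ j, ‖∑ k, (((x j - x k)⁻¹ : ℝ) : ℂ) * a k‖ ^ 2 = ‖Matrix.toEuclideanLin M y‖ ^ 2 := by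
    rw [EuclideanSpace.norm_sq_eq]
    refine sum_congr rfl fun j _ => ?_
    have : (Matrix.toEuclideanLin M y) j = M.mulVec a j := by
      simp [Matrix.toEuclideanLin_apply, y]
    rw [this, hmv, norm_mul, Complex.norm_I, one_mul]
  have h2 : ∑ j, ‖a j‖ ^ 2 = ‖y‖ ^ 2 := by
    rw [EuclideanSpace.norm_sq_eq]
  rw [h1, h2, ← b.sum_sq_norm_inner_right, ← b.sum_sq_norm_inner_right, mul_sum]
  refine sum_le_sum fun i _ => ?_
  rw [← hsymm, hb, inner_smul_left, norm_mul, mul_pow]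
  refine mul_le_mul_of_nonneg_right ?_ (by positivity)
  simpa using hbd i

theorem hs_zeta : HasSum (fun n : ℤ => 1 / (n : ℝ) ^ 2) (Real.pi ^ 2 / 3) := by
  have h := hasSum_zeta_two
  have := HasSum.of_nat_of_neg (f := fun n : ℤ => 1 / (n : ℝ) ^ 2) (by simpa using h)
    (by simpa using h)
  have e : Real.pi ^ 2 / 3 = Real.pi ^ 2 / 6 + Real.pi ^ 2 / 6 - 1 / ((0 : ℤ) : ℝ) ^ 2 := by
    norm_num
    ring
  rw [e]
  exact this

theorem hs_sep (α : ℝ) (Λ : ℤ → ℝ) 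
    (hsep : ∀ k : ℤ, α < Λ (k + 1) - Λ k) (k : ℤ) (n : ℕ) : α * n ≤ Λ (k + n) - Λ k := by
  induction n with
  | zero => simp
  | succ n ih =>
    have := hsep (k + n)
    push_cast
    rw [← add_assoc]
    linarith

theorem hs_sep' (α : ℝ) (hα : 0 < α) (Λ : ℤ → ℝ) 
    (hsep : ∀ k : ℤ, α < Λ (k + 1) - Λ k) (j k : ℤ) :
    ((Λ j - Λ k)⁻¹) ^ 2 ≤ (1 / α ^ 2) * (1 / ((j - k : ℤ) : ℝ) ^ 2) := by
  have main : ∀ (k : ℤ) (n : ℕ), ((Λ (k + n) - Λ k)⁻¹) ^ 2 ≤ (1 / α ^ 2) * (1 / (n : ℝ) ^ 2) := by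
    intro k n
    rcases Nat.eq_zero_or_pos n with rfl | hn
    · simp
    have h := hs_sep α Λ hsep k n
    have hn' : (0 : ℝ) < n := by exact_mod_cast hn
    have hp : 0 < α * n := by positivity
    have e : (1 / α ^ 2) * (1 / (n : ℝ) ^ 2) = 1 / (α * n) ^ 2 := by
      field_simp
    rw [e, inv_pow, ← one_div]
    exact one_div_le_one_div_of_le (by positivity) (pow_le_pow_left₀ (by positivity) (by linarith) 2)
  rcases le_total k j with h | h
  · obtain ⟨n, rfl⟩ := Int.le.dest h
    simpa using main k n
  · obtain ⟨n, rfl⟩ := Int.le.dest h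
    have := main j n
    rw [← neg_sub, inv_neg, neg_sq]
    simpa using this

open Finset Filter Topology in
/-- Hilbert–Schur inequality for separated frequencies: if `λ_{k+1} - λ_k > α > 0` for all
`k ∈ ℤ` and `(a_j) ∈ ℓ²(ℤ)`, then the series `(Ta)_j = Σ_{k ≠ j} a_k / (λ_j - λ_k)` converges
absolutely, lies in `ℓ²`, and `‖Ta‖_{ℓ²} ≤ (π/α) ‖a‖_{ℓ²}`. -/
theorem stmt_1 (α : ℝ) (hα : 0 < α) (Λ : ℤ → ℝ) (hΛ : StrictMono Λ)
    (hsep : ∀ k : ℤ, α < Λ (k + 1) - Λ k)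
    (a : ℤ → ℂ) (ha : Summable fun j : ℤ => ‖a j‖ ^ 2) :
    (∀ j : ℤ, Summable fun k : ℤ => if k = j then 0 else ‖a k‖ / |Λ j - Λ k|) ∧
    (Summable fun j : ℤ =>
      ‖∑' k : ℤ, if k = j then 0 else a k / (((Λ j : ℂ)) - (Λ k : ℂ))‖ ^ 2) ∧
    (∑' j : ℤ, ‖∑' k : ℤ, if k = j then 0 else a k / (((Λ j : ℂ)) - (Λ k : ℂ))‖ ^ 2)
        ^ ((1 : ℝ) / 2)
      ≤ (Real.pi / α) * (∑' j : ℤ, ‖a j‖ ^ 2) ^ ((1 : ℝ) / 2) := by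
  have hz : ∀ k : ℤ, HasSum (fun j : ℤ => (1 / α ^ 2) * (1 / ((j - k : ℤ) : ℝ) ^ 2))
      ((1 / α ^ 2) * (Real.pi ^ 2 / 3)) := fun k =>
    ((Equiv.subRight k).hasSum_iff.2 hs_zeta).mul_left _
  have hs2 : ∀ k : ℤ, Summable fun j : ℤ => ((Λ j - Λ k)⁻¹) ^ 2 := fun k =>
    Summable.of_nonneg_of_le (fun j => sq_nonneg _) (fun j => hs_sep' α hα Λ hsep j k) (hz k).summable
  have hB : ∀ (s : Finset ℤ) (k : ℤ), ∑ j ∈ s, ((Λ j - Λ k)⁻¹) ^ 2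
      ≤ (1 / α ^ 2) * (Real.pi ^ 2 / 3) := fun s k =>
    (sum_le_sum fun j _ => hs_sep' α hα Λ hsep j k).trans
      (sum_le_hasSum s (fun j _ => by positivity) (hz k))
  have habs : ∀ j : ℤ, Summable fun k : ℤ => if k = j then 0 else ‖a k‖ / |Λ j - Λ k| := by
    intro j
    refine Summable.of_nonneg_of_le (fun k => ?_) (fun k => ?_) (ha.add (hs2 j))
    · split_ifs <;> positivity
    · split_ifs
      · positivity
      · rw [div_eq_mul_inv, ← abs_inv, ← sq_abs ((Λ k - Λ j)⁻¹), abs_inv, abs_inv, abs_sub_comm (Λ k)]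
        nlinarith [sq_nonneg (‖a k‖ - |Λ j - Λ k|⁻¹), sq_nonneg (‖a k‖ + |Λ j - Λ k|⁻¹)]
  have hterm : ∀ j k : ℤ, (if k = j then 0 else a k / (((Λ j : ℂ)) - (Λ k : ℂ)))
      = (((Λ j - Λ k)⁻¹ : ℝ) : ℂ) * a k := by
    intro j k
    split_ifs with h
    · simp [h]
    · push_cast; rw [div_eq_mul_inv, mul_comm]
  simp only [hterm]
  have hsum : ∀ j : ℤ, Summable fun k : ℤ => (((Λ j - Λ k)⁻¹ : ℝ) : ℂ) * a k := by
    intro j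
    refine Summable.of_norm_bounded (habs j) fun k => ?_
    rw [← hterm]
    split_ifs
    · simp
    · rw [norm_div, ← Complex.ofReal_sub, Complex.norm_real, Real.norm_eq_abs]
  have hfin : ∀ J : Finset ℤ, ∑ j ∈ J, ‖∑' k : ℤ, (((Λ j - Λ k)⁻¹ : ℝ) : ℂ) * a k‖ ^ 2
      ≤ (Real.pi / α) ^ 2 * ∑' j, ‖a j‖ ^ 2 := by
    intro J
    have ht : Tendsto (fun K : Finset ℤ => ∑ j ∈ J, ‖∑ k ∈ K, (((Λ j - Λ k)⁻¹ : ℝ) : ℂ) * a k‖ ^ 2)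
        atTop (𝓝 (∑ j ∈ J, ‖∑' k : ℤ, (((Λ j - Λ k)⁻¹ : ℝ) : ℂ) * a k‖ ^ 2)) :=
      tendsto_finsetSum _ fun j _ => ((hsum j).hasSum.norm).pow 2
    refine le_of_tendsto ht ?_
    filter_upwards [eventually_ge_atTop J] with K hK
    have h1 := hs_finite (fun k : K => Λ k) (fun p q h => Subtype.ext (hΛ.injective h)) _
      (fun k => by
        have := hB K k
        rw [← sum_coe_sort] at this
        exact this) (fun k : K => a k)
    have h2 : ∑ j ∈ K, ‖∑ k ∈ K, (((Λ j - Λ k)⁻¹ : ℝ) : ℂ) * a k‖ ^ 2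
        ≤ 3 * ((1 / α ^ 2) * (Real.pi ^ 2 / 3)) * ∑ j ∈ K, ‖a j‖ ^ 2 := by
      rw [← sum_coe_sort K, ← sum_coe_sort K (fun j => ‖a j‖ ^ 2)]
      simp_rw [← sum_coe_sort K (fun k => (_ : ℂ) * a k)]
      exact h1
    calc _ ≤ ∑ j ∈ K, ‖∑ k ∈ K, (((Λ j - Λ k)⁻¹ : ℝ) : ℂ) * a k‖ ^ 2 :=
          sum_le_sum_of_subset_of_nonneg hK fun _ _ _ => by positivity
      _ ≤ _ := h2
      _ = (Real.pi / α) ^ 2 * ∑ j ∈ K, ‖a j‖ ^ 2 := by ring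
      _ ≤ _ := mul_le_mul_of_nonneg_left (ha.sum_le_tsum K fun _ _ => by positivity) (by positivity)
  have hS : Summable fun j : ℤ => ‖∑' k : ℤ, (((Λ j - Λ k)⁻¹ : ℝ) : ℂ) * a k‖ ^ 2 :=
    summable_of_sum_le (fun _ => by positivity) hfin
  refine ⟨habs, hS, ?_⟩
  rw [← Real.sqrt_eq_rpow, ← Real.sqrt_eq_rpow]
  refine (Real.sqrt_le_sqrt (hS.tsum_le_of_sum_le hfin)).trans ?_
  rw [Real.sqrt_mul (by positivity), Real.sqrt_sq (by have := Real.pi_pos; positivity)]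
end

section
/- Let α > 0 and let f be an α-separated trigonometric polynomial, f(x) = Σ_{n=1}^N c_n e^{iλ_n x}. Then for every x ∈ ℝ, ∫_x^{x+1} |f(s)|² ds ≤ (2π/α + 1) Σ_{n=1}^N |c_n|². -/
lemma aux_sum1 (g : ℕ → ℝ) (hg : ∀ n, 0 ≤ g n) (g0 : g 0 = 0) (Z : ℝ) (hZ : HasSum g Z)
    (N s : ℕ) : ∑ r ∈ Finset.range N, g (r - s) ≤ Z := by
  have h1 : ∑ r ∈ Finset.range N, g (r - s) ≤ ∑ r ∈ Finset.range (s + N), g (r - s) := by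
    apply Finset.sum_le_sum_of_subset_of_nonneg
    · intro i; simp; omega
    · intros; apply hg
  rw [Finset.sum_range_add] at h1
  have h2 : ∑ r ∈ Finset.range s, g (r - s) = 0 := by
    apply Finset.sum_eq_zero
    intro i hi
    have : i - s = 0 := by simp at hi; omega
    rw [this, g0]
  simp only [h2, Nat.add_sub_cancel_left, zero_add] at h1
  exact h1.trans (sum_le_hasSum _ (fun i _ => hg i) hZ)

lemma aux_sum2 (g : ℕ → ℝ) (hg : ∀ n, 0 ≤ g n) (g0 : g 0 = 0) (Z : ℝ) (hZ : HasSum g Z)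
    (N s : ℕ) : ∑ r ∈ Finset.range N, g (s - r) ≤ Z := by
  have h1 : ∑ r ∈ Finset.range N, g (s - r) ≤ ∑ r ∈ Finset.range ((s + 1) + N), g (s - r) := by
    apply Finset.sum_le_sum_of_subset_of_nonneg
    · intro i; simp; omega
    · intros; apply hg
  rw [Finset.sum_range_add] at h1
  have h2 : ∑ r ∈ Finset.range N, g (s - (s + 1 + r)) = 0 := by
    apply Finset.sum_eq_zero
    intro i hi
    have : s - (s + 1 + i) = 0 := by omega
    rw [this, g0]
  have h3 := Finset.sum_range_reflect g (s + 1)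
  simp only [Nat.add_sub_cancel] at h3
  rw [h2, h3, add_zero] at h1
  exact h1.trans (sum_le_hasSum _ (fun i _ => hg i) hZ)

lemma aux_Q (α : ℝ) (hα : 0 < α) (N : ℕ) (L : Fin N → ℝ)
    (hL : ∀ r s : Fin N, α * |(r : ℝ) - (s : ℝ)| ≤ |L r - L s|) (s : Fin N) :
    ∑ r, ((L r - L s)⁻¹) ^ 2 ≤ Real.pi ^ 2 / (3 * α ^ 2) := by
  set g : ℕ → ℝ := fun n => 1 / (n : ℝ) ^ 2 with hgd
  have hg : ∀ n, 0 ≤ g n := fun n => by simp only [hgd]; positivity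
  have g0 : g 0 = 0 := by simp [hgd]
  have key : ∀ r : Fin N, ((L r - L s)⁻¹) ^ 2
      ≤ (1 / α ^ 2) * (g ((r : ℕ) - (s : ℕ)) + g ((s : ℕ) - (r : ℕ))) := by
    intro r
    have h := hL r s
    rcases lt_trichotomy (r : ℕ) (s : ℕ) with h1 | h1 | h1
    · have e : (r : ℕ) - (s : ℕ) = 0 := by omega
      have hlt : (r : ℝ) < (s : ℝ) := by exact_mod_cast h1
      rw [e, g0, zero_add]
      simp only [hgd]
      rw [Nat.cast_sub h1.le, ← mul_one_div, ← sq_abs ((L r - L s)⁻¹), abs_inv, inv_pow, mul_one_div,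
        mul_one_div, div_div, ← mul_pow, ← one_div]
      rw [abs_sub_comm (r : ℝ), abs_of_pos (sub_pos.2 hlt)] at h
      have : 0 < α * ((s : ℝ) - r) := mul_pos hα (sub_pos.2 hlt)
      gcongr
    · have : r = s := Fin.ext h1
      subst this
      simp [g0]
    · have e : (s : ℕ) - (r : ℕ) = 0 := by omega
      have hlt : (s : ℝ) < (r : ℝ) := by exact_mod_cast h1
      rw [e, g0, add_zero]
      simp only [hgd]
      rw [Nat.cast_sub h1.le, ← mul_one_div, ← sq_abs ((L r - L s)⁻¹), abs_inv, inv_pow, mul_one_div,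
        mul_one_div, div_div, ← mul_pow, ← one_div]
      rw [abs_of_pos (sub_pos.2 hlt)] at h
      have : 0 < α * ((r : ℝ) - s) := mul_pos hα (sub_pos.2 hlt)
      gcongr
  have hZ : HasSum g (Real.pi ^ 2 / 6) := hasSum_zeta_two
  calc _ ≤ ∑ r : Fin N, (1 / α ^ 2) * (g ((r : ℕ) - (s : ℕ)) + g ((s : ℕ) - (r : ℕ))) :=
        Finset.sum_le_sum fun r _ => key r
    _ = (1 / α ^ 2) * (∑ r ∈ Finset.range N, g (r - (s : ℕ)) +
          ∑ r ∈ Finset.range N, g ((s : ℕ) - r)) := by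
        rw [← Finset.mul_sum, Finset.sum_add_distrib, Finset.sum_range, Finset.sum_range]
    _ ≤ (1 / α ^ 2) * (Real.pi ^ 2 / 6 + Real.pi ^ 2 / 6) := by
        gcongr
        · exact aux_sum1 g hg g0 _ hZ _ _
        · exact aux_sum2 g hg g0 _ hZ _ _
    _ = _ := by field_simp; norm_num

lemma aux_id {N : ℕ} (L : Fin N → ℝ) (hL : Function.Injective L) (r s t : Fin N) :
    (L r - L s)⁻¹ * (L r - L t)⁻¹ = (L s - L t)⁻¹ * ((L r - L s)⁻¹ - (L r - L t)⁻¹)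
      + (if r = s then ((L s - L t)⁻¹) ^ 2 else 0) + (if r = t then ((L s - L t)⁻¹) ^ 2 else 0)
      + (if s = t then ((L r - L s)⁻¹) ^ 2 else 0) := by
  by_cases h1 : r = s
  · subst h1
    by_cases h2 : r = t
    · subst h2; simp
    · simp only [h2, sub_self, inv_zero, if_true, if_false]
      generalize (L r - L t)⁻¹ = z
      ring
  · by_cases h2 : r = t
    · subst h2
      rw [← neg_sub (L r) (L s), inv_neg]
      simp only [h1, Ne.symm h1, sub_self, inv_zero, if_true, if_false]
      generalize (L r - L s)⁻¹ = z
      ring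
    · by_cases h3 : s = t
      · subst h3
        simp only [h1, sub_self, inv_zero, if_true, if_false]
        generalize (L r - L s)⁻¹ = z
        ring
      · have a1 : L r - L s ≠ 0 := sub_ne_zero.2 (hL.ne h1)
        have a2 : L r - L t ≠ 0 := sub_ne_zero.2 (hL.ne h2)
        have a3 : L s - L t ≠ 0 := sub_ne_zero.2 (hL.ne h3)
        simp [h1, h2, h3]
        field_simp
        ring

lemma aux_sumid {N : ℕ} (L : Fin N → ℝ) (hL : Function.Injective L) (s t : Fin N) :
    ∑ r, (L r - L s)⁻¹ * (L r - L t)⁻¹ =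
      (L s - L t)⁻¹ * (∑ r, (L r - L s)⁻¹ - ∑ r, (L r - L t)⁻¹)
      + 2 * ((L s - L t)⁻¹) ^ 2 + (if s = t then ∑ r, ((L r - L s)⁻¹) ^ 2 else 0) := by
  rw [Finset.sum_congr rfl fun r _ => aux_id L hL r s t]
  rw [Finset.sum_add_distrib, Finset.sum_add_distrib, Finset.sum_add_distrib, ← Finset.mul_sum,
    Finset.sum_sub_distrib]
  by_cases h : s = t <;> simp [h] <;> ring

lemma aux_eig (α : ℝ) (hα : 0 < α) (N : ℕ) (L : Fin N → ℝ)
    (hL : ∀ r s : Fin N, α * |(r : ℝ) - (s : ℝ)| ≤ |L r - L s|)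
    (v : Fin N → ℂ) (hv : v ≠ 0) (μ : ℝ)
    (h : ∀ r, ∑ s, (((L r - L s)⁻¹ : ℝ) : ℂ) * v s = -Complex.I * μ * v r) :
    |μ| ≤ Real.pi / α := by
  have hinj : Function.Injective L := by
    intro r s hrs
    have := hL r s
    rw [hrs, sub_self, abs_zero] at this
    have h2 : |(r : ℝ) - (s : ℝ)| ≤ 0 := by
      by_contra h3
      push Not at h3
      nlinarith [mul_pos hα h3]
    have h3 := sub_eq_zero.1 (abs_nonpos_iff.1 h2)
    exact Fin.ext (by exact_mod_cast h3)
  set d : Fin N → Fin N → ℝ := fun r s => (L r - L s)⁻¹ with hd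
  have hskew : ∀ r s, d s r = - d r s := fun r s => by
    simp only [hd]; rw [← inv_neg, neg_sub]
  set B : Fin N → ℝ := fun s => ∑ r, d r s with hB
  set Q : Fin N → ℝ := fun s => ∑ r, d r s ^ 2 with hQ
  have hid : ∀ s t, ∑ r, d r s * d r t = d s t * (B s - B t) + 2 * d s t ^ 2
      + (if s = t then Q s else 0) := fun s t => aux_sumid L hinj s t
  have h' : ∀ r, ∑ s, (d r s : ℂ) * v s = -Complex.I * μ * v r := h
  have hc : ∀ r, ∑ s, (d r s : ℂ) * star (v s) = Complex.I * μ * star (v r) := by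
    intro r
    have := congrArg star (h' r)
    simpa using this
  -- main complex identity
  have main : (μ : ℂ) ^ 2 * ∑ r, v r * star (v r) =
      ∑ s, ∑ t, 2 * (d s t : ℂ) ^ 2 * (v s * star (v t)) + ∑ s, (Q s : ℂ) * (v s * star (v s)) := by
    have e1 : (μ : ℂ) ^ 2 * ∑ r, v r * star (v r) =
        ∑ r, (∑ s, (d r s : ℂ) * v s) * (∑ t, (d r t : ℂ) * star (v t)) := by
      rw [Finset.mul_sum]
      refine Finset.sum_congr rfl fun r _ => ?_
      rw [h', hc]
      linear_combination ((μ : ℂ) ^ 2 * (v r * star (v r))) * Complex.I_sq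
    have e2 : ∑ r, (∑ s, (d r s : ℂ) * v s) * (∑ t, (d r t : ℂ) * star (v t)) =
        ∑ s, ∑ t, ((∑ r, d r s * d r t : ℝ) : ℂ) * (v s * star (v t)) := by
      simp only [Finset.sum_mul_sum]
      rw [Finset.sum_comm]
      refine Finset.sum_congr rfl fun s _ => ?_
      rw [Finset.sum_comm]
      refine Finset.sum_congr rfl fun t _ => ?_
      push_cast
      rw [Finset.sum_mul]
      refine Finset.sum_congr rfl fun r _ => ?_
      ring
    have e3 : ∑ s, ∑ t, (d s t : ℂ) * (B s : ℂ) * (v s * star (v t)) =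
        ∑ s, (B s : ℂ) * v s * (Complex.I * μ * star (v s)) := by
      refine Finset.sum_congr rfl fun s _ => ?_
      rw [← hc, Finset.mul_sum]
      refine Finset.sum_congr rfl fun t _ => ?_
      ring
    have e4 : ∑ s, ∑ t, (d s t : ℂ) * (B t : ℂ) * (v s * star (v t)) =
        ∑ s, (B s : ℂ) * v s * (Complex.I * μ * star (v s)) := by
      rw [Finset.sum_comm]
      refine Finset.sum_congr rfl fun t _ => ?_
      have : (B t : ℂ) * v t * (Complex.I * μ * star (v t)) =
        - (B t : ℂ) * star (v t) * (-Complex.I * μ * v t) := by ring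
      rw [this, ← h', Finset.mul_sum]
      refine Finset.sum_congr rfl fun s _ => ?_
      rw [hskew t s]
      push_cast
      ring
    rw [e1, e2]
    have e5 : ∀ s t, ((∑ r, d r s * d r t : ℝ) : ℂ) * (v s * star (v t)) =
        (d s t : ℂ) * (B s : ℂ) * (v s * star (v t)) - (d s t : ℂ) * (B t : ℂ) * (v s * star (v t))
        + 2 * (d s t : ℂ) ^ 2 * (v s * star (v t))
        + (if s = t then (Q s : ℂ) * (v s * star (v t)) else 0) := by
      intro s t
      rw [hid]
      split_ifs <;> push_cast <;> ring
    simp only [e5, Finset.sum_add_distrib, Finset.sum_sub_distrib]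
    rw [e3, e4]
    simp
  have hre : ∀ z : ℂ, z * star z = ((‖z‖ ^ 2 : ℝ) : ℂ) := fun z => by
    simpa using Complex.mul_conj' z
  have hmr := congrArg Complex.re main
  simp only [hre] at hmr
  have hl : ((μ : ℂ) ^ 2 * ∑ r, ((‖v r‖ ^ 2 : ℝ) : ℂ)).re = μ ^ 2 * ∑ r, ‖v r‖ ^ 2 := by
    norm_cast
  have hr : (∑ s, (Q s : ℂ) * ((‖v s‖ ^ 2 : ℝ) : ℂ)).re = ∑ s, Q s * ‖v s‖ ^ 2 := by
    norm_cast
  rw [Complex.add_re, hl, hr] at hmr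
  have hb : (∑ s, ∑ t, 2 * (d s t : ℂ) ^ 2 * (v s * star (v t))).re ≤
      ∑ s, ∑ t, (d s t ^ 2 * ‖v s‖ ^ 2 + d s t ^ 2 * ‖v t‖ ^ 2) := by
    rw [Complex.re_sum]
    refine Finset.sum_le_sum fun s _ => ?_
    rw [Complex.re_sum]
    refine Finset.sum_le_sum fun t _ => ?_
    refine (Complex.re_le_norm _).trans ?_
    simp only [norm_mul, norm_pow, norm_star, Complex.norm_real, Complex.norm_ofNat, Real.norm_eq_abs,
      sq_abs]
    nlinarith [mul_nonneg (sq_nonneg (d s t)) (sq_nonneg (‖v s‖ - ‖v t‖))]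
  have hb2 : ∑ s, ∑ t, (d s t ^ 2 * ‖v s‖ ^ 2 + d s t ^ 2 * ‖v t‖ ^ 2) =
      2 * ∑ s, Q s * ‖v s‖ ^ 2 := by
    simp only [Finset.sum_add_distrib]
    rw [two_mul]
    congr 1
    · refine Finset.sum_congr rfl fun s _ => ?_
      simp only [hQ]
      rw [Finset.sum_mul]
      refine Finset.sum_congr rfl fun t _ => ?_
      rw [hskew t s]; ring
    · rw [Finset.sum_comm]
      refine Finset.sum_congr rfl fun s _ => ?_
      simp only [hQ]
      rw [Finset.sum_mul]
  have hq : ∑ s, Q s * ‖v s‖ ^ 2 ≤ Real.pi ^ 2 / (3 * α ^ 2) * ∑ s, ‖v s‖ ^ 2 := by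
    rw [Finset.mul_sum]
    refine Finset.sum_le_sum fun s _ => ?_
    exact mul_le_mul_of_nonneg_right (aux_Q α hα N L hL s) (sq_nonneg _)
  have hpos : 0 < ∑ s, ‖v s‖ ^ 2 := by
    obtain ⟨i, hi⟩ := Function.ne_iff.1 hv
    refine Finset.sum_pos' (fun _ _ => sq_nonneg _) ⟨i, Finset.mem_univ _, ?_⟩
    have : 0 < ‖v i‖ := norm_pos_iff.2 hi
    positivity
  have hfin : μ ^ 2 * ∑ s, ‖v s‖ ^ 2 ≤ (Real.pi / α) ^ 2 * ∑ s, ‖v s‖ ^ 2 := by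
    have : (Real.pi / α) ^ 2 = 3 * (Real.pi ^ 2 / (3 * α ^ 2)) := by field_simp
    rw [this]; linarith
  exact abs_le_of_sq_le_sq (le_of_mul_le_mul_right hfin hpos) (by positivity)

open scoped ComplexOrder in
lemma aux_form (α : ℝ) (hα : 0 < α) (N : ℕ) (L : Fin N → ℝ)
    (hL : ∀ r s : Fin N, α * |(r : ℝ) - (s : ℝ)| ≤ |L r - L s|) (u : Fin N → ℂ) :
    (∑ r, ∑ s, Complex.I * (((L r - L s)⁻¹ : ℝ) : ℂ) * (star (u r) * u s)).re
      ≤ Real.pi / α * ∑ r, ‖u r‖ ^ 2 := by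
  set A : Matrix (Fin N) (Fin N) ℂ :=
    Matrix.of fun r s => Complex.I * (((L r - L s)⁻¹ : ℝ) : ℂ) with hA
  set M : Matrix (Fin N) (Fin N) ℂ := ((Real.pi / α : ℝ) : ℂ) • (1 : Matrix (Fin N) (Fin N) ℂ) - A
    with hM
  have hAh : A.IsHermitian := by
    ext r s
    simp only [hA, Matrix.conjTranspose_apply, Matrix.of_apply, star_mul', Complex.star_def,
      Complex.conj_I, Complex.conj_ofReal]
    rw [← neg_sub (L r), inv_neg]; push_cast; ring
  have hMh : M.IsHermitian := by
    refine Matrix.IsHermitian.sub ?_ hAh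
    ext r s
    by_cases h : r = s
    · subst h; simp
    · simp [Matrix.one_apply, h, Ne.symm h]
  have hpsd : M.PosSemidef := by
    rw [hMh.posSemidef_iff_eigenvalues_nonneg]
    intro i
    set e := hMh.eigenvalues i with he
    have h1 := hMh.mulVec_eigenvectorBasis i
    set v : Fin N → ℂ := ⇑(hMh.eigenvectorBasis i) with hv
    have hv0 : v ≠ 0 := by
      intro h0
      apply hMh.eigenvectorBasis.orthonormal.ne_zero i
      ext j
      exact congrFun h0 j
    have := aux_eig α hα N L hL v hv0 (Real.pi / α - e) (by
      intro r
      have h2 : M.mulVec v r = (e • v) r := congrFun h1 r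
      clear_value e v
      rw [hM, Matrix.sub_mulVec, Matrix.smul_mulVec, Matrix.one_mulVec] at h2
      simp only [Pi.sub_apply, Pi.smul_apply, smul_eq_mul, Matrix.mulVec, dotProduct, hA,
        Matrix.of_apply, mul_assoc, ← Finset.mul_sum, Complex.real_smul] at h2
      rw [Complex.ofReal_sub]
      change _ - _ = (e : ℂ) * v r at h2
      linear_combination Complex.I * h2 + (∑ s, (((L r - L s)⁻¹ : ℝ) : ℂ) * v s) * Complex.I_sq)
    have := (abs_le.1 this).2
    change 0 ≤ e
    linarith
  have h := (Complex.le_def.1 (hpsd.dotProduct_mulVec_nonneg u)).1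
  rw [hM, Matrix.sub_mulVec, Matrix.smul_mulVec, Matrix.one_mulVec, dotProduct_sub,
    dotProduct_smul] at h
  have e1 : star u ⬝ᵥ u = ((∑ r, ‖u r‖ ^ 2 : ℝ) : ℂ) := by
    simp only [dotProduct, Pi.star_apply]
    push_cast
    refine Finset.sum_congr rfl fun r _ => ?_
    simpa using Complex.conj_mul' (u r)
  have e2 : star u ⬝ᵥ A.mulVec u =
      ∑ r, ∑ s, Complex.I * (((L r - L s)⁻¹ : ℝ) : ℂ) * (star (u r) * u s) := by
    simp only [dotProduct, Matrix.mulVec, Pi.star_apply, hA, Matrix.of_apply]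
    refine Finset.sum_congr rfl fun r _ => ?_
    rw [Finset.mul_sum]
    refine Finset.sum_congr rfl fun s _ => ?_
    ring
  rw [e1, e2, smul_eq_mul, ← Complex.ofReal_mul, Complex.sub_re, Complex.ofReal_re,
    Complex.zero_re] at h
  linarith

lemma aux_sep (α : ℝ) (N : ℕ) (Λ : ℕ → ℝ)
    (hsep : ∀ n, n + 1 < N → α < Λ (n + 1) - Λ n) (i k : ℕ) (h : i + k < N) :
    α * k ≤ Λ (i + k) - Λ i := by
  induction k with
  | zero => simp
  | succ k ih =>
    have := ih (by omega)
    have h2 := hsep (i + k) (by omega)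
    rw [← add_assoc]; push_cast; linarith

lemma aux_sep2 (α : ℝ) (N : ℕ) (Λ : ℕ → ℝ)
    (hsep : ∀ n, n + 1 < N → α < Λ (n + 1) - Λ n) (r s : Fin N) :
    α * |(r : ℝ) - (s : ℝ)| ≤ |Λ r - Λ s| := by
  wlog h : (s : ℕ) ≤ (r : ℕ) generalizing r s
  · rw [abs_sub_comm, abs_sub_comm (Λ r)]
    exact this s r (by omega)
  obtain ⟨k, hk⟩ := Nat.exists_eq_add_of_le h
  have h1 := aux_sep α N Λ hsep s k (by omega)
  rw [← hk] at h1
  have h3 : (r : ℝ) - (s : ℝ) = k := by rw [hk]; push_cast; ring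
  rw [h3, abs_of_nonneg (Nat.cast_nonneg k)]
  exact h1.trans (le_abs_self _)

lemma aux_int (a x : ℝ) : ∫ s in x..(x + 1), Complex.exp (Complex.I * a * s) =
    (if a = 0 then 1 else 0) + (-Complex.I) * ((a⁻¹ : ℝ) : ℂ) *
      (Complex.exp (Complex.I * a * (x + 1 : ℝ)) - Complex.exp (Complex.I * a * x)) := by
  by_cases h : a = 0
  · subst h; simp
  · have hc : (Complex.I * a) ≠ 0 := by simp [h]
    rw [integral_exp_mul_complex hc, if_neg h, zero_add, div_eq_inv_mul, mul_inv, Complex.inv_I,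
      Complex.ofReal_inv]

/-- For an `α`-separated trigonometric polynomial `f(x) = Σ_{n<N} c_n e^{iλ_n x}`, for every
`x ∈ ℝ`, `∫_x^{x+1} |f(s)|² ds ≤ (2π/α + 1) Σ_n |c_n|²`. -/
theorem stmt_2 (α : ℝ) (hα : 0 < α) (N : ℕ) (c : ℕ → ℂ) (Λ : ℕ → ℝ)
    (hsep : ∀ n, n + 1 < N → α < Λ (n + 1) - Λ n) (x : ℝ) :
    (∫ s in x..(x + 1),
        ‖∑ n ∈ Finset.range N, c n * Complex.exp (Complex.I * (Λ n : ℂ) * (s : ℂ))‖ ^ 2)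
      ≤ (2 * Real.pi / α + 1) * ∑ n ∈ Finset.range N, ‖c n‖ ^ 2 := by
  simp only [Finset.sum_range]
  set L : Fin N → ℝ := fun r => Λ r with hLd
  set b : Fin N → ℂ := fun r => c r with hb
  have hL : ∀ r s : Fin N, α * |(r : ℝ) - (s : ℝ)| ≤ |L r - L s| := aux_sep2 α N Λ hsep
  have hL' : ∀ r s : Fin N, α * |(r : ℝ) - (s : ℝ)| ≤ |(-L r) - (-L s)| := by
    intro r s
    rw [← neg_sub', abs_neg]; exact hL r s
  have hinj : ∀ r s, L r - L s = 0 ↔ r = s := by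
    intro r s
    constructor
    · intro h0
      have := hL r s
      rw [h0, abs_zero] at this
      have h2 : |(r : ℝ) - (s : ℝ)| ≤ 0 := by
        by_contra h3
        push Not at h3
        nlinarith [mul_pos hα h3]
      have h3 := sub_eq_zero.1 (abs_nonpos_iff.1 h2)
      exact Fin.ext (by exact_mod_cast h3)
    · rintro rfl; simp
  set E : ℝ → Fin N → ℂ := fun s r => b r * Complex.exp (Complex.I * L r * s) with hE
  have hEn : ∀ s r, ‖E s r‖ = ‖b r‖ := by
    intro s r
    have : Complex.I * L r * s = ((L r * s : ℝ) : ℂ) * Complex.I := by push_cast; ring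
    simp only [hE]
    rw [norm_mul, this, Complex.norm_exp_ofReal_mul_I, mul_one]
  have hEE : ∀ (s : ℝ) r t, star (E s t) * E s r =
      star (b t) * b r * Complex.exp (Complex.I * ((L r - L t : ℝ) : ℂ) * s) := by
    intro s r t
    simp only [hE, star_mul', Complex.star_def, ← Complex.exp_conj, map_mul, Complex.conj_I,
      Complex.conj_ofReal]
    have : Complex.I * ((L r - L t : ℝ) : ℂ) * s = -Complex.I * L t * s + Complex.I * L r * s := by
      push_cast; ring
    rw [this, Complex.exp_add]; ring
  have hpt : ∀ s : ℝ, ((‖∑ r, E s r‖ ^ 2 : ℝ) : ℂ) =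
      ∑ t, ∑ r, star (b t) * b r * Complex.exp (Complex.I * ((L r - L t : ℝ) : ℂ) * s) := by
    intro s
    have := Complex.conj_mul' (∑ r, E s r)
    rw [Complex.ofReal_pow, ← this, map_sum, Finset.sum_mul_sum]
    refine Finset.sum_congr rfl fun t _ => Finset.sum_congr rfl fun r _ => ?_
    exact hEE s r t
  have hI : ((∫ s in x..(x + 1), ‖∑ r, E s r‖ ^ 2 : ℝ) : ℂ) =
      ((∑ r, ‖b r‖ ^ 2 : ℝ) : ℂ)
      + (∑ t, ∑ r, Complex.I * (((L t - L r)⁻¹ : ℝ) : ℂ) * (star (E (x + 1) t) * E (x + 1) r))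
      + (∑ t, ∑ r, Complex.I * (((-L t - -L r)⁻¹ : ℝ) : ℂ) * (star (E x t) * E x r)) := by
    rw [← intervalIntegral.integral_ofReal]
    simp only [hpt]
    rw [intervalIntegral.integral_finsetSum]
    · have : ∀ t, (∫ s in x..(x + 1),
          ∑ r, star (b t) * b r * Complex.exp (Complex.I * ((L r - L t : ℝ) : ℂ) * s)) =
          ∑ r, ((if t = r then star (b t) * b r else 0)
           + Complex.I * (((L t - L r)⁻¹ : ℝ) : ℂ) * (star (E (x + 1) t) * E (x + 1) r)
           + Complex.I * (((-L t - -L r)⁻¹ : ℝ) : ℂ) * (star (E x t) * E x r)) := by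
        intro t
        rw [intervalIntegral.integral_finsetSum]
        · refine Finset.sum_congr rfl fun r _ => ?_
          rw [intervalIntegral.integral_const_mul, aux_int, hEE, hEE]
          have e1 : (-L t - -L r)⁻¹ = (L r - L t)⁻¹ := by congr 1; ring
          have e2 : (L t - L r)⁻¹ = -(L r - L t)⁻¹ := by rw [← inv_neg, neg_sub]
          rw [e1, e2]
          by_cases h : t = r
          · subst h; simp
          · have : ¬ (L r - L t = 0) := fun h0 => h ((hinj r t).1 h0).symm
            rw [if_neg h, if_neg this]
            push_cast; ring
        · intro r _
          apply Continuous.intervalIntegrable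
          fun_prop
      simp only [this, Finset.sum_add_distrib]
      congr 2
      push_cast
      refine Finset.sum_congr rfl fun t _ => ?_
      simpa using Complex.conj_mul' (b t)
    · intro r _
      apply Continuous.intervalIntegrable
      fun_prop
  have hre := congrArg Complex.re hI
  rw [Complex.add_re, Complex.add_re, Complex.ofReal_re, Complex.ofReal_re] at hre
  have f1 := aux_form α hα N L hL (E (x + 1))
  have f2 := aux_form α hα N (fun r => -L r) hL' (E x)
  simp only [hEn] at f1 f2
  change (∫ s in x..(x + 1), ‖∑ r, E s r‖ ^ 2) ≤ (2 * Real.pi / α + 1) * ∑ r, ‖b r‖ ^ 2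
  rw [hre]
  have : (2 * Real.pi / α + 1) * ∑ r, ‖b r‖ ^ 2 = ∑ r, ‖b r‖ ^ 2
    + Real.pi / α * ∑ r, ‖b r‖ ^ 2 + Real.pi / α * ∑ r, ‖b r‖ ^ 2 := by ring
  rw [this]
  exact add_le_add (add_le_add le_rfl f1) f2
end

section
/- Let f be a trigonometric polynomial, f(x) = Σ_{n=1}^N c_n e^{iλ_n x} with distinct real exponents λ_1 < ... < λ_N. Then Σ_{n=1}^N |c_n|² ≤ sup_{x ∈ ℝ} ∫_x^{x+1} |f(s)|² ds, i.e. (Σ_n |c_n|²)^{1/2} ≤ ‖f‖_{S²}. -/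
open Filter Topology in
theorem aux_mean (δ : ℝ) :
    Tendsto (fun K : ℕ => (K : ℂ)⁻¹ * ∫ s in (0:ℝ)..(K:ℝ), Complex.exp (Complex.I * (δ:ℂ) * (s:ℂ)))
      atTop (𝓝 (if δ = 0 then 1 else 0)) := by
  split_ifs with h
  · subst h
    refine tendsto_const_nhds.congr' ?_
    filter_upwards [eventually_gt_atTop 0] with K hK
    have : (K:ℂ) ≠ 0 := by exact_mod_cast hK.ne'
    simp [this]
  · have hd : Complex.I * (δ:ℂ) ≠ 0 := mul_ne_zero Complex.I_ne_zero (by exact_mod_cast h)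
    have hnorm : ∀ s : ℝ, ‖Complex.exp (Complex.I * (δ:ℂ) * (s:ℂ))‖ = 1 := by
      intro s
      rw [show Complex.I * (δ:ℂ) * (s:ℂ) = ((δ * s : ℝ) : ℂ) * Complex.I by push_cast; ring]
      exact Complex.norm_exp_ofReal_mul_I _
    apply squeeze_zero_norm (a := fun K : ℕ => (2 / ‖Complex.I * (δ:ℂ)‖) * ((K:ℝ))⁻¹)
    · intro K
      rw [integral_exp_mul_complex hd, norm_mul, norm_div, norm_inv, Complex.norm_natCast, mul_comm]
      gcongr
      calc _ ≤ _ := norm_sub_le _ _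
        _ = 2 := by rw [hnorm, hnorm]; norm_num
    · have := (tendsto_inv_atTop_nhds_zero_nat (𝕜 := ℝ)).const_mul (2 / ‖Complex.I * (δ:ℂ)‖)
      simpa using this

/-- Parseval-type inequality: for a trigonometric polynomial `f(x) = Σ_{n<N} c_n e^{iλ_n x}`
with strictly increasing exponents, `Σ_n |c_n|² ≤ sup_{x ∈ ℝ} ∫_x^{x+1} |f(s)|² ds`,
i.e. `(Σ_n |c_n|²)^{1/2} ≤ ‖f‖_{S²}`. -/
theorem stmt_4 (N : ℕ) (c : ℕ → ℂ) (Λ : ℕ → ℝ)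
    (hmono : ∀ n, n + 1 < N → Λ n < Λ (n + 1)) :
    ∑ n ∈ Finset.range N, ‖c n‖ ^ 2
      ≤ ⨆ x : ℝ, ∫ s in x..(x + 1),
          ‖∑ n ∈ Finset.range N, c n * Complex.exp (Complex.I * (Λ n : ℂ) * (s : ℂ))‖ ^ 2 := by
  have hlt : ∀ n m, n < m → m < N → Λ n < Λ m := by
    intro n m hnm
    induction m, hnm using Nat.le_induction with
    | base => exact hmono n
    | succ m _ ih => intro h; exact (ih (by omega)).trans (hmono m h)
  have hinj : ∀ n < N, ∀ m < N, (Λ n - Λ m = 0 ↔ n = m) := by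
    intro n hn m hm
    rcases lt_trichotomy n m with h | h | h
    · have := hlt n m h hm
      constructor <;> intro h' <;> [linarith; omega]
    · simp [h]
    · have := hlt m n h hn
      constructor <;> intro h' <;> [linarith; omega]
  set g : ℝ → ℝ := fun s =>
    ‖∑ n ∈ Finset.range N, c n * Complex.exp (Complex.I * (Λ n : ℂ) * (s : ℂ))‖ ^ 2 with hg
  have hgc : Continuous g := by fun_prop
  have hnorm : ∀ n, ∀ s : ℝ, ‖Complex.exp (Complex.I * (Λ n:ℂ) * (s:ℂ))‖ = 1 := by
    intro n s
    rw [show Complex.I * (Λ n:ℂ) * (s:ℂ) = ((Λ n * s : ℝ) : ℂ) * Complex.I by push_cast; ring]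
    exact Complex.norm_exp_ofReal_mul_I _
  have hgB : ∀ s, g s ≤ (∑ n ∈ Finset.range N, ‖c n‖) ^ 2 := by
    intro s
    simp only [hg]
    gcongr
    refine (norm_sum_le _ _).trans (le_of_eq ?_)
    simp [hnorm]
  have hbdd : BddAbove (Set.range fun x : ℝ => ∫ s in x..(x + 1), g s) := by
    refine ⟨(∑ n ∈ Finset.range N, ‖c n‖) ^ 2, ?_⟩
    rintro _ ⟨x, rfl⟩
    have := intervalIntegral.integral_mono_on (μ := MeasureTheory.volume) (a := x) (b := x + 1) (by linarith)
      (hgc.intervalIntegrable _ _) (continuous_const.intervalIntegrable _ _) (fun s _ => hgB s)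
    simpa using this
  change _ ≤ ⨆ x : ℝ, ∫ s in x..(x + 1), g s
  set S := ⨆ x : ℝ, ∫ s in x..(x + 1), g s with hS
  have hK : ∀ K : ℕ, ∫ s in (0:ℝ)..(K:ℝ), g s ≤ K * S := by
    intro K
    have h := intervalIntegral.sum_integral_adjacent_intervals (f := g) (a := fun k : ℕ => (k:ℝ))
      (n := K) (μ := MeasureTheory.volume) (fun k _ => hgc.intervalIntegrable _ _)
    simp only [Nat.cast_zero] at h
    rw [← h]
    calc _ ≤ ∑ k ∈ Finset.range K, S := Finset.sum_le_sum (fun k _ => by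
            push_cast
            exact le_ciSup hbdd (k:ℝ))
      _ = K * S := by simp
  have hexp : ∀ s : ℝ, (g s : ℂ) = ∑ n ∈ Finset.range N, ∑ m ∈ Finset.range N,
      (c n * (starRingEnd ℂ) (c m)) *
        Complex.exp (Complex.I * ((Λ n - Λ m : ℝ):ℂ) * (s:ℂ)) := by
    intro s
    simp only [hg]
    push_cast
    rw [← Complex.mul_conj', map_sum, Finset.sum_mul_sum]
    refine Finset.sum_congr rfl fun n _ => Finset.sum_congr rfl fun m _ => ?_
    rw [map_mul, ← Complex.exp_conj]
    simp only [map_mul, Complex.conj_I, Complex.conj_ofReal]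
    rw [mul_mul_mul_comm, ← Complex.exp_add]
    congr 2
    ring
  have hint : ∀ K : ℕ, (((K:ℝ)⁻¹ * ∫ s in (0:ℝ)..(K:ℝ), g s : ℝ) : ℂ) =
      ∑ n ∈ Finset.range N, ∑ m ∈ Finset.range N, (c n * (starRingEnd ℂ) (c m)) *
        ((K : ℂ)⁻¹ * ∫ s in (0:ℝ)..(K:ℝ),
          Complex.exp (Complex.I * ((Λ n - Λ m : ℝ):ℂ) * (s:ℂ))) := by
    intro K
    rw [Complex.ofReal_mul, ← intervalIntegral.integral_ofReal]
    simp_rw [hexp]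
    rw [intervalIntegral.integral_finsetSum
      (fun n _ => Continuous.intervalIntegrable (by fun_prop) _ _), Finset.mul_sum]
    refine Finset.sum_congr rfl fun n _ => ?_
    rw [intervalIntegral.integral_finsetSum
      (fun n _ => Continuous.intervalIntegrable (by fun_prop) _ _), Finset.mul_sum]
    refine Finset.sum_congr rfl fun m _ => ?_
    rw [intervalIntegral.integral_const_mul]
    push_cast
    ring
  have hlim : Filter.Tendsto (fun K : ℕ => (((K:ℝ)⁻¹ * ∫ s in (0:ℝ)..(K:ℝ), g s : ℝ) : ℂ))
      Filter.atTop (nhds ((∑ n ∈ Finset.range N, ‖c n‖ ^ 2 : ℝ) : ℂ)) := by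
    simp_rw [hint]
    have h := tendsto_finsetSum (Finset.range N) fun n _ =>
      tendsto_finsetSum (Finset.range N) fun m _ =>
        (aux_mean (Λ n - Λ m)).const_mul (c n * (starRingEnd ℂ) (c m))
    convert h using 2
    push_cast
    refine Finset.sum_congr rfl fun n hn => ?_
    rw [Finset.sum_eq_single n]
    · simp [Complex.mul_conj']
    · intro m hm hmn
      rw [if_neg, mul_zero]
      rw [hinj n (Finset.mem_range.1 hn) m (Finset.mem_range.1 hm)]
      exact hmn.symm
    · intro h; exact absurd hn h
  have hlim' := (Complex.continuous_re.tendsto _).comp hlim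
  simp only [Function.comp_def, Complex.ofReal_re] at hlim'
  refine le_of_tendsto hlim' ?_
  filter_upwards [Filter.eventually_gt_atTop 0] with K hK0
  have : (0:ℝ) < K := by exact_mod_cast hK0
  rw [inv_mul_le_iff₀ this]
  exact hK K
end

section
/- Fix a sign choice ± and let f be a trigonometric polynomial, f(x) = Σ_{n=1}^N c_n e^{iλ_n x} with distinct real exponents. Then for every x ∈ ℝ, (H_± f(x))² = f(x)² + 2 Σ_{n=1}^N Σ_{m=1}^N (−i sgn_±(λ_n + λ_m)) c_n (−i sgn_±(λ_m)) c_m e^{i(λ_n + λ_m)x}; here the double sum is the frequency-by-frequency application of the multiplier −i sgn_± to the expansion of the product f · H_± f, so this identity reads (H_± f)² = f² + 2 H_±(f H_± f). -/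
/-- `sgnPM true` is `sgn₊` (value `1` at `0`); `sgnPM false` is `sgn₋` (value `-1` at `0`). -/
noncomputable def sgnPM (pos : Bool) (x : ℝ) : ℝ :=
  if pos then (if 0 ≤ x then 1 else -1) else (if 0 < x then 1 else -1)

theorem sgnPM_add_mul (pos : Bool) (a b : ℝ) :
    sgnPM pos a * sgnPM pos b + 1 = sgnPM pos (a + b) * (sgnPM pos a + sgnPM pos b) := by
  unfold sgnPM
  cases pos <;> simp only [if_true, if_false, Bool.false_eq_true] <;> split_ifs <;>
    first | (norm_num; done) | (exfalso; linarith)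

/-- For a trigonometric polynomial `f(x) = Σ_{n<N} c_n e^{iλ_n x}` with strictly increasing
exponents and either choice of sign, `(H_± f)² = f² + 2 H_±(f · H_± f)` pointwise, where the
last term is written as the frequency-by-frequency application of the multiplier `-i sgn_±`. -/
theorem stmt_7 (pos : Bool) (N : ℕ) (c : ℕ → ℂ) (Λ : ℕ → ℝ)
    (hmono : ∀ n, n + 1 < N → Λ n < Λ (n + 1)) (x : ℝ) :
    (∑ n ∈ Finset.range N,
        (-Complex.I * (sgnPM pos (Λ n) : ℂ)) * c n
          * Complex.exp (Complex.I * (Λ n : ℂ) * (x : ℂ))) ^ 2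
      = (∑ n ∈ Finset.range N,
            c n * Complex.exp (Complex.I * (Λ n : ℂ) * (x : ℂ))) ^ 2
        + 2 * ∑ n ∈ Finset.range N, ∑ m ∈ Finset.range N,
            (-Complex.I * (sgnPM pos (Λ n + Λ m) : ℂ)) * c n
              * ((-Complex.I * (sgnPM pos (Λ m) : ℂ)) * c m)
              * Complex.exp (Complex.I * ((Λ n + Λ m : ℝ) : ℂ) * (x : ℂ)) := by
  have hsw : ∀ F : ℕ → ℕ → ℂ, 2 * ∑ n ∈ Finset.range N, ∑ m ∈ Finset.range N, F n m
      = ∑ n ∈ Finset.range N, ∑ m ∈ Finset.range N, (F n m + F m n) := by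
    intro F
    simp only [Finset.sum_add_distrib]
    rw [Finset.sum_comm (f := fun n m => F m n), two_mul]
  rw [hsw, sq, sq, Finset.sum_mul_sum, Finset.sum_mul_sum, ← Finset.sum_add_distrib]
  refine Finset.sum_congr rfl fun n _ => ?_
  rw [← Finset.sum_add_distrib]
  refine Finset.sum_congr rfl fun m _ => ?_
  have h : (sgnPM pos (Λ n) : ℂ) * (sgnPM pos (Λ m) : ℂ) + 1
      = (sgnPM pos (Λ n + Λ m) : ℂ) * ((sgnPM pos (Λ n) : ℂ) + (sgnPM pos (Λ m) : ℂ)) := by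
    exact_mod_cast sgnPM_add_mul pos (Λ n) (Λ m)
  have he : Complex.exp (Complex.I * ((Λ n + Λ m : ℝ) : ℂ) * (x : ℂ))
      = Complex.exp (Complex.I * (Λ n : ℂ) * (x : ℂ))
        * Complex.exp (Complex.I * (Λ m : ℂ) * (x : ℂ)) := by
    rw [← Complex.exp_add]
    congr 1
    push_cast
    ring
  rw [add_comm (Λ m) (Λ n), he]
  generalize Complex.exp (Complex.I * (Λ n : ℂ) * (x : ℂ)) = E
  generalize Complex.exp (Complex.I * (Λ m : ℂ) * (x : ℂ)) = G
  have hI : Complex.I * Complex.I = -1 := Complex.I_mul_I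
  linear_combination (-(c n * c m * E * G)) * h
    + (c n * c m * E * G * ((sgnPM pos (Λ n) : ℂ) * (sgnPM pos (Λ m) : ℂ)
      - (sgnPM pos (Λ n + Λ m) : ℂ) * ((sgnPM pos (Λ n) : ℂ) + (sgnPM pos (Λ m) : ℂ)))) * hI
end

section
/- Fix a sign choice ±. For every k ∈ ℕ (k ≥ 1) and every α > 0, there exists a constant C = C(k, α) > 0 such that for every finite family f_1, ..., f_M of trigonometric polynomials, each of which is α-separated, ‖(Σ_{m=1}^M |H_± f_m|²)^{1/2}‖_{S^{2^k}} ≤ C ‖(Σ_{m=1}^M |f_m|²)^{1/2}‖_{S^{2^k}}. -/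
/-- A trigonometric polynomial `x ↦ Σ_{n<N} c_n e^{iλ_n x}` with strictly increasing real
exponents. -/
structure TrigPoly where
  N : ℕ
  c : ℕ → ℂ
  Λ : ℕ → ℝ
  mono : ∀ n, n + 1 < N → Λ n < Λ (n + 1)

/-- Evaluation of a trigonometric polynomial. -/
noncomputable def TrigPoly.eval (P : TrigPoly) (x : ℝ) : ℂ :=
  ∑ n ∈ Finset.range P.N, P.c n * Complex.exp (Complex.I * (P.Λ n : ℂ) * (x : ℂ))

/-- `α`-separation of the exponents: `λ_{n+1} - λ_n > α`. -/
def TrigPoly.sep (P : TrigPoly) (α : ℝ) : Prop :=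
  ∀ n, n + 1 < P.N → α < P.Λ (n + 1) - P.Λ n

/-- The modified Hilbert transform `H_± f(x) = Σ_n (-i sgn_±(λ_n)) c_n e^{iλ_n x}`. -/
noncomputable def TrigPoly.hilb (pos : Bool) (P : TrigPoly) (x : ℝ) : ℂ :=
  ∑ n ∈ Finset.range P.N,
    (-Complex.I * (sgnPM pos (P.Λ n) : ℂ)) * P.c n
      * Complex.exp (Complex.I * (P.Λ n : ℂ) * (x : ℂ))

/-- The Stepanov norm `‖f‖_{S^p} = (sup_{x ∈ ℝ} ∫_x^{x+1} |f(s)|^p ds)^{1/p}` of a function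
`f : ℝ → ℝ`. -/
noncomputable def stepanovNorm (p : ℝ) (f : ℝ → ℝ) : ℝ :=
  (⨆ x : ℝ, ∫ s in x..(x + 1), |f s| ^ p) ^ (1 / p)


noncomputable def wW (b x : ℝ) : ℝ := Real.sinc (b * x / 2) ^ 2

lemma wW_nonneg (b x : ℝ) : 0 ≤ wW b x := sq_nonneg _

lemma wW_cont (b : ℝ) : Continuous (wW b) := by
  unfold wW
  have := Real.continuous_sinc
  fun_prop

lemma wW_neg (b x : ℝ) : wW b (-x) = wW b x := by
  unfold wW
  rw [show b * (-x) / 2 = -(b * x / 2) by ring, Real.sinc_neg]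

lemma wW_le (b x : ℝ) (hb : 0 < b) (hb1 : b ≤ 1) : wW b x ≤ (8 / b ^ 2) * (1 + x ^ 2)⁻¹ := by
  unfold wW
  have h1 : Real.sinc (b * x / 2) ^ 2 ≤ 1 := by
    rw [sq_le_one_iff_abs_le_one, abs_le]
    exact ⟨Real.neg_one_le_sinc _, Real.sinc_le_one _⟩
  have h2 : (b * x / 2) ^ 2 * Real.sinc (b * x / 2) ^ 2 ≤ 1 := by
    by_cases h : b * x / 2 = 0
    · rw [h]; simp
    · rw [Real.sinc_of_ne_zero h, ← mul_pow, mul_div_cancel₀ _ h]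
      exact Real.sin_sq_le_one _
  have hb2 : b ^ 2 ≤ 1 := by nlinarith
  rw [← div_eq_mul_inv, div_div, le_div_iff₀ (by positivity)]
  nlinarith [sq_nonneg (Real.sinc (b * x / 2)), mul_nonneg (sq_nonneg (Real.sinc (b * x / 2))) (sub_nonneg.2 hb2)]

lemma wW_lower (b x : ℝ) (hb : 0 < b) (hb1 : b ≤ 1) (hx0 : 0 ≤ x) (hx1 : x ≤ 1) : 1 / 4 ≤ wW b x := by
  unfold wW
  have h : 1 / 2 ≤ Real.sinc (b * x / 2) := by
    by_cases h : b * x / 2 = 0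
    · rw [h]; simp; norm_num
    · have h0 : 0 < b * x / 2 := lt_of_le_of_ne (by positivity) (Ne.symm h)
      have h1 : b * x / 2 ≤ 1 / 2 := by nlinarith
      rw [Real.sinc_of_ne_zero h, le_div_iff₀ h0]
      have := Real.mul_le_sin h0.le (by linarith [Real.pi_gt_three])
      have h3 : 1 / 2 ≤ 2 / Real.pi := by
        rw [le_div_iff₀ Real.pi_pos]; linarith [Real.pi_le_four]
      nlinarith
  nlinarith

lemma wW_int (b : ℝ) (hb : 0 < b) (hb1 : b ≤ 1) : MeasureTheory.Integrable (wW b) := by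
  refine (integrable_inv_one_add_sq.const_mul (8 / b ^ 2)).mono'
    (wW_cont b).aestronglyMeasurable (Filter.Eventually.of_forall fun x => ?_)
  rw [Real.norm_of_nonneg (wW_nonneg b x)]
  exact wW_le b x hb hb1

noncomputable def qq (c x : ℝ) : ℝ := (1 - Real.cos (c * x)) / x ^ 2

lemma qq_one_int : MeasureTheory.Integrable (qq 1) := by
  refine ((wW_int 1 one_pos le_rfl).const_mul (1 / 2)).congr ?_
  filter_upwards [MeasureTheory.Measure.ae_ne MeasureTheory.volume (0 : ℝ)] with x hx
  have h : 1 * x / 2 ≠ 0 := by simpa using hx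
  unfold wW qq
  rw [Real.sinc_of_ne_zero h]
  have : Real.cos (1 * x) = 1 - 2 * Real.sin (1 * x / 2) ^ 2 := by
    rw [show 1 * x = 2 * (1 * x / 2) by ring, Real.cos_two_mul, Real.cos_sq']; ring_nf
  rw [this]
  field_simp
  ring

lemma qq_eq (c x : ℝ) (hc : c ≠ 0) : qq c x = c ^ 2 * qq 1 (c * x) := by
  unfold qq
  by_cases hx : x = 0
  · simp [hx]
  · field_simp

lemma qq_int (c : ℝ) : MeasureTheory.Integrable (qq c) := by
  by_cases hc : c = 0
  · subst hc
    have : qq 0 = fun _ => 0 := by funext x; simp [qq]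
    rw [this]; exact MeasureTheory.integrable_zero _ _ _
  · have : qq c = fun x => c ^ 2 * qq 1 (c * x) := funext fun x => qq_eq c x hc
    rw [this]
    exact (qq_one_int.comp_mul_left' hc).const_mul _

lemma qq_integral (c : ℝ) : ∫ x, qq c x = |c| * ∫ x, qq 1 x := by
  by_cases hc : c = 0
  · subst hc
    simp [qq]
  · simp_rw [qq_eq c _ hc]
    rw [MeasureTheory.integral_const_mul, MeasureTheory.Measure.integral_comp_mul_left (qq 1), smul_eq_mul,
      ← mul_assoc, abs_inv, ← sq_abs c]
    congr 1
    have : |c| ≠ 0 := abs_ne_zero.2 hc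
    field_simp

lemma wW_cos (b μ : ℝ) (hb : 0 < b) (hμ : b ≤ |μ|) : ∫ x, wW b x * Real.cos (μ * x) = 0 := by
  have h1 : ∫ x, wW b x * Real.cos (μ * x)
      = ∫ x, (2 / b ^ 2) * ((1 / 2) * qq (μ + b) x + (1 / 2) * qq (μ - b) x - qq μ x) := by
    apply MeasureTheory.integral_congr_ae
    filter_upwards [MeasureTheory.Measure.ae_ne MeasureTheory.volume (0 : ℝ)] with x hx
    have h : b * x / 2 ≠ 0 := by positivity
    unfold wW qq
    rw [Real.sinc_of_ne_zero h, add_mul, sub_mul, Real.cos_add, Real.cos_sub]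
    have : Real.cos (b * x) = 1 - 2 * Real.sin (b * x / 2) ^ 2 := by
      rw [show b * x = 2 * (b * x / 2) by ring, Real.cos_two_mul, Real.cos_sq']; ring_nf
    rw [this]
    field_simp
    ring
  rw [h1, MeasureTheory.integral_const_mul, MeasureTheory.integral_sub, MeasureTheory.integral_add,
    MeasureTheory.integral_const_mul, MeasureTheory.integral_const_mul, qq_integral (μ + b),
    qq_integral (μ - b), qq_integral μ]
  · have : |μ + b| + |μ - b| = 2 * |μ| := by
      rcases le_abs.1 hμ with h | h
      · rw [abs_of_nonneg (by linarith), abs_of_nonneg (by linarith), abs_of_nonneg (by linarith)]; ring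
      · rw [abs_of_nonpos (by linarith), abs_of_nonpos (by linarith), abs_of_nonpos (by linarith)]; ring
    have h2 : 1 / 2 * (|μ + b| * ∫ x, qq 1 x) + 1 / 2 * (|μ - b| * ∫ x, qq 1 x) - |μ| * ∫ x, qq 1 x
      = (1 / 2 * (|μ + b| + |μ - b|) - |μ|) * ∫ x, qq 1 x := by ring
    rw [h2, this]; ring
  · exact (qq_int _).const_mul _
  · exact (qq_int _).const_mul _
  · exact ((qq_int _).const_mul _).add ((qq_int _).const_mul _)
  · exact qq_int _

lemma wW_sin (b μ : ℝ) : ∫ x, wW b x * Real.sin (μ * x) = 0 := by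
  have h := MeasureTheory.integral_neg_eq_self (fun x => wW b x * Real.sin (μ * x)) MeasureTheory.volume
  have h2 : ∀ x, wW b (-x) * Real.sin (μ * -x) = - (wW b x * Real.sin (μ * x)) := by
    intro x; rw [wW_neg, mul_neg, Real.sin_neg]; ring
  simp only [h2, MeasureTheory.integral_neg] at h
  linarith

/-- continuous and bounded -/
def CB {E : Type*} [NormedAddCommGroup E] (f : ℝ → E) : Prop :=
  Continuous f ∧ ∃ C, ∀ x, ‖f x‖ ≤ C

lemma CB.add {E : Type*} [NormedAddCommGroup E] {f g : ℝ → E} (hf : CB f) (hg : CB g) :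
    CB (fun x => f x + g x) := by
  obtain ⟨h1, C, hC⟩ := hf
  obtain ⟨h2, D, hD⟩ := hg
  exact ⟨h1.add h2, C + D, fun x => (norm_add_le _ _).trans (add_le_add (hC x) (hD x))⟩

lemma CB.neg {E : Type*} [NormedAddCommGroup E] {f : ℝ → E} (hf : CB f) :
    CB (fun x => - f x) := by
  obtain ⟨h1, C, hC⟩ := hf
  exact ⟨h1.neg, C, fun x => by rw [norm_neg]; exact hC x⟩

lemma CB.sub {E : Type*} [NormedAddCommGroup E] {f g : ℝ → E} (hf : CB f) (hg : CB g) :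
    CB (fun x => f x - g x) := by
  simpa [sub_eq_add_neg] using hf.add hg.neg

lemma CB.const {E : Type*} [NormedAddCommGroup E] (c : E) : CB (fun _ : ℝ => c) :=
  ⟨continuous_const, ‖c‖, fun _ => le_rfl⟩

lemma CB.mul {E : Type*} [NormedRing E] {f g : ℝ → E} (hf : CB f) (hg : CB g) :
    CB (fun x => f x * g x) := by
  obtain ⟨h1, C, hC⟩ := hf
  obtain ⟨h2, D, hD⟩ := hg
  exact ⟨h1.mul h2, C * D, fun x => (norm_mul_le _ _).trans
    (mul_le_mul (hC x) (hD x) (norm_nonneg _) ((norm_nonneg _).trans (hC x)))⟩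

lemma CB.pow {E : Type*} [NormedRing E] {f : ℝ → E} (hf : CB f) (n : ℕ) :
    CB (fun x => f x ^ n) := by
  induction n with
  | zero => simpa using CB.const (1 : E)
  | succ n ih => simpa [pow_succ] using ih.mul hf

lemma CB.sum {E ι : Type*} [NormedAddCommGroup E] (s : Finset ι) {f : ι → ℝ → E} (hf : ∀ i, CB (f i)) :
    CB (fun x => ∑ i ∈ s, f i x) := by
  classical
  induction s using Finset.induction_on with
  | empty => simpa using CB.const (0 : E)
  | insert a s ha ih => simpa [Finset.sum_insert ha] using (hf a).add ih

lemma CB.norm {E : Type*} [NormedAddCommGroup E] {f : ℝ → E} (hf : CB f) :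
    CB (fun x => ‖f x‖) := by
  obtain ⟨h1, C, hC⟩ := hf
  exact ⟨h1.norm, C, fun x => by simpa using hC x⟩

lemma CB.re {f : ℝ → ℂ} (hf : CB f) : CB (fun x => (f x).re) := by
  obtain ⟨h1, C, hC⟩ := hf
  exact ⟨Complex.continuous_re.comp h1, C, fun x => (Complex.abs_re_le_norm _).trans (hC x)⟩

lemma CB.star {f : ℝ → ℂ} (hf : CB f) : CB (fun x => (starRingEnd ℂ) (f x)) := by
  obtain ⟨h1, C, hC⟩ := hf
  exact ⟨Complex.continuous_conj.comp h1, C, fun x => by simpa using hC x⟩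

lemma CB.ee (μ : ℝ) : CB (fun x : ℝ => Complex.exp (Complex.I * (μ : ℂ) * (x : ℂ))) := by
  refine ⟨by fun_prop, 1, fun x => ?_⟩
  beta_reduce
  rw [show Complex.I * (μ : ℂ) * (x : ℂ) = ((μ * x : ℝ) : ℂ) * Complex.I by push_cast; ring,
    Complex.norm_exp_ofReal_mul_I]

lemma wW_int_mul (b y : ℝ) (hb : 0 < b) (hb1 : b ≤ 1) {g : ℝ → ℝ} (hg : CB g) :
    MeasureTheory.Integrable (fun x => wW b (x - y) * g x) := by
  obtain ⟨h1, C, hC⟩ := hg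
  exact ((wW_int b hb hb1).comp_sub_right y).mul_bdd h1.aestronglyMeasurable
    (Filter.Eventually.of_forall hC)

lemma wW_int_mulC (b y : ℝ) (hb : 0 < b) (hb1 : b ≤ 1) {g : ℝ → ℂ} (hg : CB g) :
    MeasureTheory.Integrable (fun x => (wW b (x - y) : ℂ) * g x) := by
  obtain ⟨h1, C, hC⟩ := hg
  exact ((wW_int b hb hb1).comp_sub_right y).ofReal.mul_bdd h1.aestronglyMeasurable
    (Filter.Eventually.of_forall hC)

lemma wW_exp (b μ y : ℝ) (hb : 0 < b) (hb1 : b ≤ 1) (hμ : b ≤ |μ|) :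
    ∫ x, (wW b (x - y) : ℂ) * Complex.exp (Complex.I * (μ : ℂ) * (x : ℂ)) = 0 := by
  have h0 := MeasureTheory.integral_sub_right_eq_self (μ := MeasureTheory.volume)
    (fun x : ℝ => (wW b x : ℂ) * Complex.exp (Complex.I * (μ : ℂ) * ((x + y : ℝ) : ℂ))) y
  simp only [sub_add_cancel] at h0
  rw [h0]
  have h1 : ∀ x : ℝ, (wW b x : ℂ) * Complex.exp (Complex.I * (μ : ℂ) * ((x + y : ℝ) : ℂ))
    = Complex.exp (Complex.I * μ * y) *
      (((wW b x * Real.cos (μ * x) : ℝ) : ℂ) + ((wW b x * Real.sin (μ * x) : ℝ) : ℂ) * Complex.I) := by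
    intro x
    rw [show Complex.I * (μ : ℂ) * ((x + y : ℝ) : ℂ) = Complex.I * μ * y + ((μ * x : ℝ) : ℂ) * Complex.I by
      push_cast; ring, Complex.exp_add, Complex.exp_mul_I]
    push_cast
    ring
  have hc : CB (fun x => Real.cos (μ * x)) :=
    ⟨by fun_prop, 1, fun x => Real.abs_cos_le_one _⟩
  have hs : CB (fun x => Real.sin (μ * x)) :=
    ⟨by fun_prop, 1, fun x => Real.abs_sin_le_one _⟩
  have ic := wW_int_mul b 0 hb hb1 hc
  have is := wW_int_mul b 0 hb hb1 hs
  simp only [sub_zero] at ic is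
  simp_rw [h1]
  rw [MeasureTheory.integral_const_mul, MeasureTheory.integral_add ic.ofReal (is.ofReal.mul_const _),
    MeasureTheory.integral_mul_const, integral_complex_ofReal, integral_complex_ofReal,
    wW_cos b μ hb hμ, wW_sin]
  simp

/-- local to global -/
lemma local_bound (b : ℝ) (hb : 0 < b) (hb1 : b ≤ 1) : ∃ C : ℝ, 0 < C ∧ ∀ (g : ℝ → ℝ) (S y : ℝ), CB g →
    (∀ x, 0 ≤ g x) → (∀ x, ∫ s in x..(x+1), g s ≤ S) → ∫ x, wW b (x - y) * g x ≤ C * S := by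
  have hsum : Summable (fun j : ℕ => (1 + (j : ℝ) ^ 2)⁻¹) := by
    refine Summable.of_nonneg_of_le (fun j => by positivity) (fun j => ?_)
      (((Real.summable_one_div_nat_pow (p := 2)).2 (by norm_num)).add
        (summable_of_ne_finset_zero (s := {0}) (f := fun j : ℕ => if j = 0 then (1:ℝ) else 0) (by
          intro j hj; simp at hj; simp [hj])))
    by_cases h : j = 0
    · simp [h]
    · simp only [h, if_false, add_zero, one_div]
      have : 0 < (j : ℝ) := by positivity
      gcongr
      linarith
  set T := ∑' j : ℕ, (1 + (j : ℝ) ^ 2)⁻¹ with hT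
  have hTpos : 0 < T := hsum.tsum_pos (fun j => by positivity) 0 (by norm_num)
  -- half line bound
  have half : ∀ (g : ℝ → ℝ) (S : ℝ), CB g → (∀ x, 0 ≤ g x) → (∀ x, ∫ s in x..(x+1), g s ≤ S) →
      ∀ n : ℕ, ∫ x in (0:ℝ)..n, wW b x * g x ≤ (8 / b ^ 2) * T * S := by
    intro g S hg hg0 hS n
    have hc : Continuous (fun x => wW b x * g x) := (wW_cont b).mul hg.1
    have hS0 : 0 ≤ S := le_trans (intervalIntegral.integral_nonneg (by norm_num) (fun x _ => hg0 x)) (hS 0)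
    have h1 := intervalIntegral.sum_integral_adjacent_intervals (f := fun x => wW b x * g x)
      (a := fun j : ℕ => (j : ℝ)) (n := n) (μ := MeasureTheory.volume)
      (fun k _ => hc.intervalIntegrable _ _)
    simp only [Nat.cast_zero] at h1
    rw [← h1]
    calc ∑ j ∈ Finset.range n, ∫ x in (j:ℝ)..((j+1 : ℕ):ℝ), wW b x * g x
        ≤ ∑ j ∈ Finset.range n, (8 / b ^ 2) * S * (1 + (j : ℝ) ^ 2)⁻¹ := by
          refine Finset.sum_le_sum fun j _ => ?_
          push_cast
          calc ∫ x in (j:ℝ)..((j:ℝ)+1), wW b x * g x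
              ≤ ∫ x in (j:ℝ)..((j:ℝ)+1), ((8 / b ^ 2) * (1 + (j : ℝ) ^ 2)⁻¹) * g x := by
                refine intervalIntegral.integral_mono_on (by linarith) (hc.intervalIntegrable _ _)
                  ((continuous_const.mul hg.1).intervalIntegrable _ _) fun x hx => ?_
                refine mul_le_mul_of_nonneg_right ((wW_le b x hb hb1).trans ?_) (hg0 x)
                have : (j:ℝ) ≤ x := hx.1
                gcongr
            _ = ((8 / b ^ 2) * (1 + (j : ℝ) ^ 2)⁻¹) * ∫ x in (j:ℝ)..((j:ℝ)+1), g x := by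
                rw [intervalIntegral.integral_const_mul]
            _ ≤ ((8 / b ^ 2) * (1 + (j : ℝ) ^ 2)⁻¹) * S := by
                refine mul_le_mul_of_nonneg_left (hS _) (by positivity)
            _ = _ := by ring
      _ = (8 / b ^ 2) * S * ∑ j ∈ Finset.range n, (1 + (j : ℝ) ^ 2)⁻¹ := by rw [Finset.mul_sum]
      _ ≤ (8 / b ^ 2) * S * T := by
          refine mul_le_mul_of_nonneg_left ?_ (by positivity)
          exact hsum.sum_le_tsum _ (fun j _ => by positivity)
      _ = _ := by ring
  have full : ∀ (g : ℝ → ℝ) (S : ℝ), CB g → (∀ x, 0 ≤ g x) → (∀ x, ∫ s in x..(x+1), g s ≤ S) →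
      ∫ x, wW b x * g x ≤ (16 / b ^ 2) * T * S := by
    intro g S hg hg0 hS
    have hc : Continuous (fun x => wW b x * g x) := (wW_cont b).mul hg.1
    have hi := wW_int_mul b 0 hb hb1 hg
    simp only [sub_zero] at hi
    have ht := MeasureTheory.intervalIntegral_tendsto_integral hi
      (Filter.tendsto_neg_atTop_atBot.comp (tendsto_natCast_atTop_atTop (R := ℝ)))
      (tendsto_natCast_atTop_atTop (R := ℝ))
    refine le_of_tendsto' ht fun n => ?_
    rw [← intervalIntegral.integral_add_adjacent_intervals (b := 0) (hc.intervalIntegrable _ _)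
      (hc.intervalIntegrable _ _)]
    have hA := half g S hg hg0 hS n
    have hB := half (fun x => g (-x)) S ⟨hg.1.comp continuous_neg, by
      obtain ⟨_, C, hC⟩ := hg; exact ⟨C, fun x => hC _⟩⟩ (fun x => hg0 _) (fun x => by
        rw [intervalIntegral.integral_comp_neg (fun x => g x)]
        have := hS (-(x+1))
        rwa [show -(x+1)+1 = -x by ring] at this) n
    have hC : ∫ x in (0:ℝ)..n, wW b x * g (-x) = ∫ x in (-(n:ℝ))..0, wW b x * g x := by
      have := intervalIntegral.integral_comp_neg (a := 0) (b := n) (fun x => wW b x * g x)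
      simp only [wW_neg, neg_zero] at this
      exact this
    rw [hC] at hB
    simp only [Function.comp]
    calc _ ≤ (8 / b ^ 2) * T * S + (8 / b ^ 2) * T * S := add_le_add hB hA
      _ = _ := by ring
  refine ⟨(16 / b ^ 2) * T, by positivity, fun g S y hg hg0 hS => ?_⟩
  have h0 := MeasureTheory.integral_sub_right_eq_self (μ := MeasureTheory.volume)
    (fun x : ℝ => wW b x * g (x + y)) y
  simp only [sub_add_cancel] at h0
  rw [h0]
  refine full (fun x => g (x + y)) S ⟨hg.1.comp (continuous_add_const y), by
      obtain ⟨_, C, hC⟩ := hg; exact ⟨C, fun x => hC _⟩⟩ (fun x => hg0 _) (fun x => ?_)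
  rw [intervalIntegral.integral_comp_add_right (fun x => g x)]
  have := hS (x + y)
  rwa [show x + y + 1 = x + 1 + y by ring] at this

noncomputable def ee (μ : ℝ) : ℝ → ℂ := fun x => Complex.exp (Complex.I * (μ : ℂ) * (x : ℂ))

lemma ee_mul (μ ν : ℝ) : ee μ * ee ν = ee (μ + ν) := by
  funext x
  simp only [ee, Pi.mul_apply, ← Complex.exp_add]
  congr 1; push_cast; ring

lemma ee_conj (μ x : ℝ) : (starRingEnd ℂ) (ee μ x) = ee (-μ) x := by
  simp only [ee, ← Complex.exp_conj]
  simp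

lemma ee_norm (μ x : ℝ) : ‖ee μ x‖ = 1 := by
  unfold ee
  rw [show Complex.I * (μ : ℂ) * (x : ℂ) = ((μ * x : ℝ) : ℂ) * Complex.I by push_cast; ring,
    Complex.norm_exp_ofReal_mul_I]

def VV (b : ℝ) : Submodule ℂ (ℝ → ℂ) := Submodule.span ℂ {g | ∃ μ : ℝ, b ≤ μ ∧ g = ee μ}
def UU (b : ℝ) : Submodule ℂ (ℝ → ℂ) := Submodule.span ℂ {g | ∃ μ : ℝ, b ≤ |μ| ∧ g = ee μ}

lemma VV_le_UU (b : ℝ) : VV b ≤ UU b := by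
  refine Submodule.span_mono ?_
  rintro g ⟨μ, h, rfl⟩
  exact ⟨μ, h.trans (le_abs_self μ), rfl⟩

lemma UU_CB (b : ℝ) {g : ℝ → ℂ} (hg : g ∈ UU b) : CB g := by
  induction hg using Submodule.span_induction with
  | mem g h => obtain ⟨μ, _, rfl⟩ := h; exact CB.ee μ
  | zero => exact CB.const 0
  | add f g _ _ hf hg => exact hf.add hg
  | smul c f _ hf => exact (CB.const c).mul hf

lemma UU_int (b y : ℝ) (hb : 0 < b) (hb1 : b ≤ 1) {g : ℝ → ℂ} (hg : g ∈ UU b) :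
    ∫ x, (wW b (x - y) : ℂ) * g x = 0 := by
  induction hg using Submodule.span_induction with
  | mem g h => obtain ⟨μ, h, rfl⟩ := h; exact wW_exp b μ y hb hb1 h
  | zero => simp
  | add f g hf' hg' hf hg =>
    simp only [Pi.add_apply, mul_add]
    rw [MeasureTheory.integral_add (wW_int_mulC b y hb hb1 (UU_CB b hf'))
      (wW_int_mulC b y hb hb1 (UU_CB b hg')), hf, hg, add_zero]
  | smul c f _ hf =>
    simp only [Pi.smul_apply, smul_eq_mul, mul_left_comm _ c]
    rw [MeasureTheory.integral_const_mul, hf, mul_zero]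

lemma VV_mul (b : ℝ) (hb : 0 < b) {f g : ℝ → ℂ} (hf : f ∈ VV b) (hg : g ∈ VV b) : f * g ∈ VV b := by
  induction hf using Submodule.span_induction with
  | mem f h =>
    obtain ⟨μ, h, rfl⟩ := h
    induction hg using Submodule.span_induction with
    | mem g h' =>
      obtain ⟨ν, h', rfl⟩ := h'
      exact Submodule.subset_span ⟨μ + ν, by linarith, ee_mul μ ν⟩
    | zero => simp
    | add f g _ _ hf hg => rw [mul_add]; exact add_mem hf hg
    | smul c f _ hf => rw [mul_smul_comm]; exact Submodule.smul_mem _ _ hf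
  | zero => simp
  | add f g _ _ hf hg => rw [add_mul]; exact add_mem hf hg
  | smul c f _ hf => rw [smul_mul_assoc]; exact Submodule.smul_mem _ _ hf

lemma VV_pow (b : ℝ) (hb : 0 < b) {f : ℝ → ℂ} (hf : f ∈ VV b) (K : ℕ) : f ^ (K + 1) ∈ VV b := by
  induction K with
  | zero => simpa using hf
  | succ n ih => rw [pow_succ]; exact VV_mul b hb ih hf

lemma pw (K : ℕ) : ∃ C : ℝ, 0 < C ∧ ∀ (a c : ℝ) (z : ℂ), 0 ≤ a → 0 ≤ c →
    ‖z - ((a ^ 2 - c ^ 2 : ℝ) : ℂ)‖ ≤ 2 * (a * c) →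
    (c ^ 2) ^ K ≤ C * (a ^ 2) ^ K + 2 * ((-1 : ℂ) ^ K * z ^ K).re := by
  have hcont : ContinuousAt (fun w : ℂ => w ^ K) 1 := by fun_prop
  obtain ⟨ε, hε, hball⟩ := Metric.continuousAt_iff.1 hcont (1 / 2) (by norm_num)
  set δ := min 1 (ε / 4) with hδ
  have hδ0 : 0 < δ := lt_min one_pos (by linarith)
  have hδ1 : δ ≤ 1 := min_le_left _ _
  have hδ2 : δ ≤ ε / 4 := min_le_right _ _
  refine ⟨3 * ((1 + 1 / δ) ^ 2) ^ K, by positivity, fun a c z ha hc hz => ?_⟩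
  by_cases h : a ≤ δ * c ∧ 0 < c
  · obtain ⟨h1, h2⟩ := h
    have hc2 : 0 < c ^ 2 := by positivity
    set w : ℂ := -z / ((c ^ 2 : ℝ) : ℂ) with hw
    have hcc : ((c ^ 2 : ℝ) : ℂ) ≠ 0 := by exact_mod_cast hc2.ne'
    have hzw : -z = ((c ^ 2 : ℝ) : ℂ) * w := by rw [hw]; field_simp
    have hzc : ‖z + ((c ^ 2 : ℝ) : ℂ)‖ < ε * c ^ 2 := by
      have e : z + ((c ^ 2 : ℝ) : ℂ) = (z - ((a ^ 2 - c ^ 2 : ℝ) : ℂ)) + ((a ^ 2 : ℝ) : ℂ) := by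
        push_cast; ring
      rw [e]
      refine (norm_add_le _ _).trans_lt ?_
      rw [Complex.norm_of_nonneg (sq_nonneg a)]
      have h3 : a * c ≤ δ * c ^ 2 := by nlinarith
      have h4 : a ^ 2 ≤ δ * c ^ 2 := by nlinarith
      nlinarith
    have hw1 : dist w 1 < ε := by
      rw [dist_eq_norm]
      have e : w - 1 = -(z + ((c ^ 2 : ℝ) : ℂ)) / ((c ^ 2 : ℝ) : ℂ) := by
        rw [hw]; field_simp; ring
      rw [e, norm_div, norm_neg, Complex.norm_of_nonneg hc2.le, div_lt_iff₀ hc2]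
      exact hzc
    have h5 := hball hw1
    simp only [one_pow, dist_eq_norm] at h5
    have h6 : 1 / 2 ≤ (w ^ K).re := by
      have := (Complex.abs_re_le_norm (w ^ K - 1)).trans h5.le
      rw [abs_le] at this
      simp at this
      linarith [this.1]
    have h7 : ((-1 : ℂ) ^ K * z ^ K).re = (c ^ 2) ^ K * (w ^ K).re := by
      rw [← mul_pow, neg_one_mul, hzw, mul_pow, ← Complex.ofReal_pow, Complex.re_ofReal_mul]
    rw [h7]
    have : 0 < (c ^ 2) ^ K := by positivity
    have : 0 ≤ 3 * ((1 + 1 / δ) ^ 2) ^ K * (a ^ 2) ^ K := by positivity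
    nlinarith
  · have h1 : c ≤ a * (1 / δ) := by
      rw [mul_one_div, le_div_iff₀ hδ0]
      by_cases h2 : 0 < c
      · have := lt_of_not_ge (fun h' => h ⟨h', h2⟩)
        linarith
      · have : c = 0 := by linarith
        simp [this, ha]
    have hD : 0 < 1 / δ := by positivity
    have h2 : (c ^ 2) ^ K ≤ ((1 + 1 / δ) ^ 2) ^ K * (a ^ 2) ^ K := by
      rw [← mul_pow, ← mul_pow]
      gcongr
      nlinarith
    have hzn : ‖z‖ ≤ ((1 + 1 / δ) * a) ^ 2 := by
      have e : z = (z - ((a ^ 2 - c ^ 2 : ℝ) : ℂ)) + ((a ^ 2 - c ^ 2 : ℝ) : ℂ) := by ring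
      have h3 : ‖((a ^ 2 - c ^ 2 : ℝ) : ℂ)‖ ≤ a ^ 2 + c ^ 2 := by
        rw [Complex.norm_real, Real.norm_eq_abs, abs_le]
        constructor <;> nlinarith
      have h4 : ‖z‖ ≤ (a + c) ^ 2 := by
        rw [e]
        refine (norm_add_le _ _).trans ?_
        nlinarith
      refine h4.trans ?_
      have : a + c ≤ (1 + 1 / δ) * a := by linarith
      gcongr
    have h3 : |((-1 : ℂ) ^ K * z ^ K).re| ≤ ((1 + 1 / δ) ^ 2) ^ K * (a ^ 2) ^ K := by
      refine (Complex.abs_re_le_norm _).trans ?_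
      rw [norm_mul, norm_pow, norm_neg, norm_one, one_pow, one_mul, norm_pow, ← mul_pow, ← mul_pow]
      gcongr
    have := (abs_le.1 h3).1
    linarith

lemma cotlar (b : ℝ) (hb : 0 < b) (hb1 : b ≤ 1) (K : ℕ) : ∃ C : ℝ, 0 < C ∧
    ∀ (M : ℕ) (P N : Fin M → ℝ → ℂ) (y : ℝ), (∀ m, P m ∈ VV b) →
    (∀ m, (fun x => (starRingEnd ℂ) (N m x)) ∈ VV b) →
    ∫ x, wW b (x - y) * (∑ m, ‖P m x - N m x‖ ^ 2) ^ (K + 1)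
      ≤ C * ∫ x, wW b (x - y) * (∑ m, ‖P m x + N m x‖ ^ 2) ^ (K + 1) := by
  obtain ⟨C, hC, hpw⟩ := pw (K + 1)
  refine ⟨C, hC, fun M P N y hP hN => ?_⟩
  have cP : ∀ m, CB (P m) := fun m => UU_CB b (VV_le_UU b (hP m))
  have cN : ∀ m, CB (N m) := fun m => by
    simpa using (UU_CB b (VV_le_UU b (hN m))).star
  have cA : CB (fun x => (∑ m, ‖P m x + N m x‖ ^ 2) ^ (K + 1)) :=
    (CB.sum Finset.univ fun m => (((cP m).add (cN m)).norm.pow 2)).pow (K + 1)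
  have cB : CB (fun x => (∑ m, ‖P m x - N m x‖ ^ 2) ^ (K + 1)) :=
    (CB.sum Finset.univ fun m => (((cP m).sub (cN m)).norm.pow 2)).pow (K + 1)
  set z : ℝ → ℂ := ∑ m, (4 : ℂ) • (P m * fun x => (starRingEnd ℂ) (N m x)) with hz
  have hzV : z ∈ VV b := Submodule.sum_mem _ fun m _ => Submodule.smul_mem _ _ (VV_mul b hb (hP m) (hN m))
  have hzK : ((-1 : ℂ) ^ (K + 1)) • z ^ (K + 1) ∈ UU b :=
    VV_le_UU b (Submodule.smul_mem _ _ (VV_pow b hb hzV K))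
  have cZ := UU_CB b hzK
  have hint := UU_int b y hb hb1 hzK
  have hre : ∫ x, wW b (x - y) * ((((-1 : ℂ) ^ (K + 1)) • z ^ (K + 1)) x).re = 0 := by
    have h := integral_re (𝕜 := ℂ) (wW_int_mulC b y hb hb1 cZ)
    rw [hint] at h
    simpa using h
  have key : ∀ x, (∑ m, ‖P m x - N m x‖ ^ 2) ^ (K + 1) ≤
      C * (∑ m, ‖P m x + N m x‖ ^ 2) ^ (K + 1) + 2 * ((((-1 : ℂ) ^ (K + 1)) • z ^ (K + 1)) x).re := by
    intro x
    have hA : 0 ≤ ∑ m, ‖P m x + N m x‖ ^ 2 := Finset.sum_nonneg fun m _ => sq_nonneg _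
    have hB : 0 ≤ ∑ m, ‖P m x - N m x‖ ^ 2 := Finset.sum_nonneg fun m _ => sq_nonneg _
    have := hpw (√(∑ m, ‖P m x + N m x‖ ^ 2)) (√(∑ m, ‖P m x - N m x‖ ^ 2)) (z x)
      (Real.sqrt_nonneg _) (Real.sqrt_nonneg _) ?_
    · rwa [Real.sq_sqrt hA, Real.sq_sqrt hB] at this
    · rw [Real.sq_sqrt hA, Real.sq_sqrt hB]
      have e : z x - ((∑ m, ‖P m x + N m x‖ ^ 2 - ∑ m, ‖P m x - N m x‖ ^ 2 : ℝ) : ℂ)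
        = ∑ m, (4 * (P m x * (starRingEnd ℂ) (N m x)) - ((‖P m x + N m x‖ ^ 2 - ‖P m x - N m x‖ ^ 2 : ℝ) : ℂ)) := by
        rw [hz, Finset.sum_sub_distrib, ← Finset.sum_sub_distrib, Complex.ofReal_sum]
        simp [Finset.sum_apply]
      rw [e]
      calc _ ≤ ∑ m, ‖(4 * (P m x * (starRingEnd ℂ) (N m x)) - ((‖P m x + N m x‖ ^ 2 - ‖P m x - N m x‖ ^ 2 : ℝ) : ℂ))‖ :=
            norm_sum_le _ _
        _ ≤ ∑ m, 2 * (‖P m x + N m x‖ * ‖P m x - N m x‖) := by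
            refine Finset.sum_le_sum fun m _ => ?_
            generalize P m x = p
            generalize N m x = n
            have e1 : 4 * (p * (starRingEnd ℂ) n) - ((‖p + n‖ ^ 2 - ‖p - n‖ ^ 2 : ℝ) : ℂ)
              = ((-2 * ((p + n) * (starRingEnd ℂ) (p - n)).im : ℝ) : ℂ) * Complex.I := by
              rw [← Complex.normSq_eq_norm_sq, ← Complex.normSq_eq_norm_sq]
              apply Complex.ext
              · simp [Complex.normSq_apply]; ring
              · simp [Complex.normSq_apply]; ring
            rw [e1, norm_mul, Complex.norm_I, mul_one, Complex.norm_real, norm_mul]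
            have := Complex.abs_im_le_norm ((p + n) * (starRingEnd ℂ) (p - n))
            rw [norm_mul, RCLike.norm_conj] at this
            simpa using this
        _ = 2 * ∑ m, (‖P m x + N m x‖ * ‖P m x - N m x‖) := by rw [Finset.mul_sum]
        _ ≤ _ := by
            refine mul_le_mul_of_nonneg_left ?_ (by norm_num)
            exact Real.sum_mul_le_sqrt_mul_sqrt _ _ _
  have iA := wW_int_mul b y hb hb1 cA
  have iB := wW_int_mul b y hb hb1 cB
  have iZ := wW_int_mul b y hb hb1 cZ.re
  calc _ ≤ ∫ x, (C * (wW b (x - y) * (∑ m, ‖P m x + N m x‖ ^ 2) ^ (K + 1)) +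
        2 * (wW b (x - y) * ((((-1 : ℂ) ^ (K + 1)) • z ^ (K + 1)) x).re)) := by
        refine MeasureTheory.integral_mono iB ((iA.const_mul C).add (iZ.const_mul 2)) fun x => ?_
        have := mul_le_mul_of_nonneg_left (key x) (wW_nonneg b (x - y))
        beta_reduce
        linarith
    _ = _ := by
        rw [MeasureTheory.integral_add (iA.const_mul C) (iZ.const_mul 2), MeasureTheory.integral_const_mul,
          MeasureTheory.integral_const_mul, hre]
        ring

lemma tangent (D F : ℝ) (hD : 0 ≤ D) (hF : 0 ≤ F) (K : ℕ) :
    D ^ (K + 1) + (K + 1) * D ^ K * (F - D) ≤ F ^ (K + 1) := by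
  induction K with
  | zero => simp
  | succ n ih =>
    have h1 := mul_le_mul_of_nonneg_right ih hF
    have h2 : 0 ≤ (n + 1) * D ^ n * (F - D) ^ 2 := by positivity
    push_cast
    have e1 : D ^ (n + 1 + 1) + (n + 1 + 1) * D ^ (n + 1) * (F - D) + (n + 1) * D ^ n * (F - D) ^ 2
      = (D ^ (n + 1) + (n + 1) * D ^ n * (F - D)) * F := by ring
    have e2 : F ^ (n + 1 + 1) = F ^ (n + 1) * F := by ring
    linarith

lemma single (b : ℝ) (hb : 0 < b) (hb1 : b ≤ 1) (y ν : ℝ) (d : ℂ) (g : ℝ → ℂ) (cg : CB g) (hg : ee (-ν) * g ∈ UU b) :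
    (∫ x, wW b (x - y)) * ‖d‖ ^ 2 ≤ ∫ x, wW b (x - y) * ‖g x + d * ee ν x‖ ^ 2 := by
  have hg2 : (2 * (starRingEnd ℂ) d) • (ee (-ν) * g) ∈ UU b := Submodule.smul_mem _ _ hg
  have cZ := UU_CB b hg2
  have hre : ∫ x, wW b (x - y) * (((2 * (starRingEnd ℂ) d) • (ee (-ν) * g)) x).re = 0 := by
    have h := integral_re (𝕜 := ℂ) (wW_int_mulC b y hb hb1 cZ)
    rw [UU_int b y hb hb1 hg2] at h
    simpa using h
  have i1 := wW_int_mul b y hb hb1 (CB.const (‖d‖ ^ 2))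
  have iZ := wW_int_mul b y hb hb1 cZ.re
  have i2 := wW_int_mul b y hb hb1 ((cg.add ((CB.const d).mul (CB.ee ν))).norm.pow 2)
  rw [← MeasureTheory.integral_mul_const]
  calc _ = ∫ x, (wW b (x - y) * ‖d‖ ^ 2 + wW b (x - y) * (((2 * (starRingEnd ℂ) d) • (ee (-ν) * g)) x).re) := by
        rw [MeasureTheory.integral_add i1 iZ, hre, add_zero]
    _ ≤ _ := by
        refine MeasureTheory.integral_mono (i1.add iZ) i2 fun x => ?_
        beta_reduce
        rw [← mul_add]
        refine mul_le_mul_of_nonneg_left ?_ (wW_nonneg _ _)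
        have h1 : ‖g x + d * ee ν x‖ ^ 2 = ‖g x‖ ^ 2 + ‖d‖ ^ 2 + 2 * (g x * (starRingEnd ℂ) (d * ee ν x)).re := by
          rw [← Complex.normSq_eq_norm_sq, Complex.normSq_add, Complex.normSq_eq_norm_sq,
            Complex.normSq_eq_norm_sq, norm_mul, ee_norm, mul_one]
        have h2 : (((2 * (starRingEnd ℂ) d) • (ee (-ν) * g)) x).re = 2 * (g x * (starRingEnd ℂ) (d * ee ν x)).re := by
          rw [map_mul, ee_conj]
          have : ((2 * (starRingEnd ℂ) d) • (ee (-ν) * g)) x = ((2 : ℝ) : ℂ) * (g x * ((starRingEnd ℂ) d * ee (-ν) x)) := by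
            simp; ring
          rw [this, Complex.re_ofReal_mul]
        rw [h1, h2]
        nlinarith [sq_nonneg ‖g x‖]

lemma DK (b : ℝ) (hb : 0 < b) (hb1 : b ≤ 1) (K M : ℕ) (y : ℝ) (ν : Fin M → ℝ) (d : Fin M → ℂ)
    (g : Fin M → ℝ → ℂ) (cg : ∀ m, CB (g m)) (hg : ∀ m, ee (-ν m) * g m ∈ UU b) :
    (∫ x, wW b (x - y)) * (∑ m, ‖d m‖ ^ 2) ^ (K + 1) ≤
      ∫ x, wW b (x - y) * (∑ m, ‖g m x + d m * ee (ν m) x‖ ^ 2) ^ (K + 1) := by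
  set D := ∑ m, ‖d m‖ ^ 2 with hD
  have hD0 : 0 ≤ D := Finset.sum_nonneg fun m _ => sq_nonneg _
  have c1 : ∀ m, CB (fun x => ‖g m x + d m * ee (ν m) x‖ ^ 2) := fun m =>
    ((cg m).add ((CB.const (d m)).mul (CB.ee (ν m)))).norm.pow 2
  have cF := CB.sum Finset.univ c1
  have h1 : (∫ x, wW b (x - y)) * D ≤ ∫ x, wW b (x - y) * ∑ m, ‖g m x + d m * ee (ν m) x‖ ^ 2 := by
    simp_rw [hD, Finset.mul_sum]
    rw [MeasureTheory.integral_finsetSum _ (fun m _ => wW_int_mul b y hb hb1 (c1 m))]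
    exact Finset.sum_le_sum fun m _ => single b hb hb1 y (ν m) (d m) (g m) (cg m) (hg m)
  have i0 := wW_int_mul b y hb hb1 (CB.const (D ^ (K + 1) - (K + 1) * D ^ K * D))
  have i1 := (wW_int_mul b y hb hb1 cF).const_mul ((K + 1) * D ^ K)
  have i2 := wW_int_mul b y hb hb1 (cF.pow (K + 1))
  have h2 : ∫ x, (wW b (x - y) * (D ^ (K + 1) - (K + 1) * D ^ K * D) +
      (K + 1) * D ^ K * (wW b (x - y) * ∑ m, ‖g m x + d m * ee (ν m) x‖ ^ 2)) ≤
      ∫ x, wW b (x - y) * (∑ m, ‖g m x + d m * ee (ν m) x‖ ^ 2) ^ (K + 1) := by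
    refine MeasureTheory.integral_mono (i0.add i1) i2 fun x => ?_
    have := mul_le_mul_of_nonneg_left (tangent D (∑ m, ‖g m x + d m * ee (ν m) x‖ ^ 2) hD0
      (Finset.sum_nonneg fun m _ => sq_nonneg _) K) (wW_nonneg b (x - y))
    beta_reduce
    linarith
  rw [MeasureTheory.integral_add i0 i1, MeasureTheory.integral_const_mul, MeasureTheory.integral_mul_const] at h2
  have h3 := mul_le_mul_of_nonneg_left h1 (show 0 ≤ ((K : ℝ) + 1) * D ^ K by positivity)
  linarith

lemma sep_lt (P : TrigPoly) (α : ℝ) (hα : 0 < α) (h : P.sep α) (i : ℕ) :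
    ∀ j, i < j → j < P.N → α < P.Λ j - P.Λ i := by
  intro j hij
  induction j, hij using Nat.le_induction with
  | base => exact fun hj => h i hj
  | succ j hj ih =>
    intro hjN
    have h1 := ih (by omega)
    have h2 := h j hjN
    linarith

lemma sep_abs (P : TrigPoly) (α : ℝ) (hα : 0 < α) (h : P.sep α) (i j : ℕ) (hi : i < P.N) (hj : j < P.N)
    (hij : i ≠ j) : α < |P.Λ i - P.Λ j| := by
  rcases lt_or_gt_of_ne hij with h1 | h1
  · rw [abs_sub_comm]; exact (sep_lt P α hα h i j h1 hj).trans_le (le_abs_self _)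
  · exact (sep_lt P α hα h j i h1 hi).trans_le (le_abs_self _)

lemma decomp (pos : Bool) (P : TrigPoly) (α b : ℝ) (hα : 0 < α) (h : P.sep α) (hb : 0 < b) (hbα : b ≤ α / 2) :
    ∃ (p n : ℝ → ℂ) (d : ℂ) (ν s : ℝ), p ∈ VV b ∧ (fun x => (starRingEnd ℂ) (n x)) ∈ VV b ∧
      ee (-ν) * (p + n) ∈ UU b ∧ |s| = 1 ∧
      (∀ x, P.eval x = (p + n) x + d * ee ν x) ∧
      (∀ x, P.hilb pos x = -Complex.I * (p x - n x) + -Complex.I * s * (d * ee ν x)) := by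
  classical
  set p : ℝ → ℂ := ∑ k ∈ Finset.range P.N, (if α / 2 ≤ P.Λ k then P.c k else 0) • ee (P.Λ k) with hp
  set n : ℝ → ℂ := ∑ k ∈ Finset.range P.N, (if P.Λ k ≤ -(α / 2) then P.c k else 0) • ee (P.Λ k) with hn
  have hpV : p ∈ VV b := by
    refine Submodule.sum_mem _ fun k _ => ?_
    split_ifs with h1
    · exact Submodule.smul_mem _ _ (Submodule.subset_span ⟨_, by linarith, rfl⟩)
    · simp
  have hnV : (fun x => (starRingEnd ℂ) (n x)) ∈ VV b := by
    have e : (fun x => (starRingEnd ℂ) (n x)) = ∑ k ∈ Finset.range P.N,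
        ((starRingEnd ℂ) (if P.Λ k ≤ -(α / 2) then P.c k else 0)) • ee (-P.Λ k) := by
      funext x
      simp only [hn, Finset.sum_apply, Pi.smul_apply, smul_eq_mul, map_sum, map_mul, ee_conj]
    rw [e]
    refine Submodule.sum_mem _ fun k _ => ?_
    split_ifs with h1
    · exact Submodule.smul_mem _ _ (Submodule.subset_span ⟨_, by linarith, rfl⟩)
    · simp
  have hU : ∀ ν : ℝ, (∀ k, k < P.N → (α / 2 ≤ P.Λ k ∨ P.Λ k ≤ -(α / 2)) → b ≤ |P.Λ k - ν|) →
      ee (-ν) * (p + n) ∈ UU b := by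
    intro ν hν
    rw [hp, hn, mul_add, Finset.mul_sum, Finset.mul_sum]
    refine add_mem (Submodule.sum_mem _ fun k hk => ?_) (Submodule.sum_mem _ fun k hk => ?_)
    · split_ifs with h1
      · rw [mul_smul_comm, ee_mul]
        refine Submodule.smul_mem _ _ (Submodule.subset_span ⟨_, ?_, rfl⟩)
        rw [neg_add_eq_sub]
        exact hν k (Finset.mem_range.1 hk) (Or.inl h1)
      · simp
    · split_ifs with h1
      · rw [mul_smul_comm, ee_mul]
        refine Submodule.smul_mem _ _ (Submodule.subset_span ⟨_, ?_, rfl⟩)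
        rw [neg_add_eq_sub]
        exact hν k (Finset.mem_range.1 hk) (Or.inr h1)
      · simp
  have sp : ∀ t : ℝ, 0 < t → sgnPM pos t = 1 := by
    intro t ht; unfold sgnPM; simp [ht, ht.le]
  have sn : ∀ t : ℝ, t < 0 → sgnPM pos t = -1 := by
    intro t ht; unfold sgnPM; simp [not_le.2 ht, not_lt.2 ht.le]
  have sabs : ∀ t : ℝ, |sgnPM pos t| = 1 := by
    intro t; unfold sgnPM; split_ifs <;> simp
  have hev : ∀ x, P.eval x = (p + n) x +
      ∑ k ∈ Finset.range P.N, (if |P.Λ k| < α / 2 then P.c k * ee (P.Λ k) x else 0) := by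
    intro x
    simp only [hp, hn, Pi.add_apply, Finset.sum_apply, Pi.smul_apply, smul_eq_mul, TrigPoly.eval,
      ← Finset.sum_add_distrib]
    refine Finset.sum_congr rfl fun k _ => ?_
    change P.c k * ee (P.Λ k) x = _
    by_cases h1 : α / 2 ≤ P.Λ k
    · have h2 : ¬ P.Λ k ≤ -(α / 2) := by linarith
      have h3 : ¬ |P.Λ k| < α / 2 := by rw [abs_lt]; intro h'; linarith [h'.2]
      simp [h1, h2, h3]
    · by_cases h2 : P.Λ k ≤ -(α / 2)
      · have h3 : ¬ |P.Λ k| < α / 2 := by rw [abs_lt]; intro h'; linarith [h'.1]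
        simp [h1, h2, h3]
      · have h3 : |P.Λ k| < α / 2 := by rw [abs_lt]; constructor <;> linarith
        simp [h1, h2, h3]
  have hhi : ∀ x, P.hilb pos x = -Complex.I * (p x - n x) +
      ∑ k ∈ Finset.range P.N, (if |P.Λ k| < α / 2 then
        -Complex.I * (sgnPM pos (P.Λ k) : ℂ) * (P.c k * ee (P.Λ k) x) else 0) := by
    intro x
    simp only [hp, hn, Finset.sum_apply, Pi.smul_apply, smul_eq_mul, TrigPoly.hilb,
      ← Finset.sum_add_distrib, ← Finset.sum_sub_distrib, Finset.mul_sum]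
    refine Finset.sum_congr rfl fun k _ => ?_
    change -Complex.I * (sgnPM pos (P.Λ k) : ℂ) * P.c k * ee (P.Λ k) x = _
    by_cases h1 : α / 2 ≤ P.Λ k
    · have h2 : ¬ P.Λ k ≤ -(α / 2) := by linarith
      have h3 : ¬ |P.Λ k| < α / 2 := by rw [abs_lt]; intro h'; linarith [h'.2]
      rw [sp _ (by linarith)]
      simp [h1, h2, h3]; ring
    · by_cases h2 : P.Λ k ≤ -(α / 2)
      · have h3 : ¬ |P.Λ k| < α / 2 := by rw [abs_lt]; intro h'; linarith [h'.1]
        rw [sn _ (by linarith)]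
        simp [h1, h2, h3]; ring
      · have h3 : |P.Λ k| < α / 2 := by rw [abs_lt]; constructor <;> linarith
        simp [h1, h2, h3]; ring
  by_cases hex : ∃ k0, k0 < P.N ∧ |P.Λ k0| < α / 2
  · obtain ⟨k0, hk0, hs⟩ := hex
    have huniq : ∀ k ∈ Finset.range P.N, k ≠ k0 → ¬ |P.Λ k| < α / 2 := by
      intro k hk hne h'
      have h1 := sep_abs P α hα h k k0 (Finset.mem_range.1 hk) hk0 hne
      have h2 := abs_sub (P.Λ k) (P.Λ k0)
      linarith
    refine ⟨p, n, P.c k0, P.Λ k0, sgnPM pos (P.Λ k0), hpV, hnV, hU _ ?_, sabs _, ?_, ?_⟩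
    · intro k hk hor
      have hne : k ≠ k0 := by
        rintro rfl
        rw [abs_lt] at hs
        rcases hor with h' | h' <;> linarith [hs.1, hs.2]
      have h1 := sep_abs P α hα h k k0 hk hk0 hne
      linarith
    · intro x
      rw [hev x, Finset.sum_eq_single k0 (fun k hk hne => if_neg (huniq k hk hne))
        (fun h' => absurd (Finset.mem_range.2 hk0) h'), if_pos hs]
    · intro x
      rw [hhi x, Finset.sum_eq_single k0 (fun k hk hne => if_neg (huniq k hk hne))
        (fun h' => absurd (Finset.mem_range.2 hk0) h'), if_pos hs]
  · push Not at hex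
    refine ⟨p, n, 0, 0, 1, hpV, hnV, hU _ ?_, by simp, ?_, ?_⟩
    · intro k hk _
      rw [sub_zero]
      linarith [hex k hk]
    · intro x
      rw [hev x, Finset.sum_eq_zero (fun k hk => if_neg (not_lt.2 (hex k (Finset.mem_range.1 hk))))]
      simp
    · intro x
      rw [hhi x, Finset.sum_eq_zero (fun k hk => if_neg (not_lt.2 (hex k (Finset.mem_range.1 hk))))]
      simp

lemma two_pow_bound (a c : ℝ) (ha : 0 ≤ a) (hc : 0 ≤ c) (K : ℕ) :
    (2 * a + 2 * c) ^ (K + 1) ≤ 4 ^ (K + 1) * (a ^ (K + 1) + c ^ (K + 1)) := by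
  have h := add_pow_le (show 0 ≤ 2 * a by positivity) (show 0 ≤ 2 * c by positivity) (K + 1)
  simp only [Nat.add_sub_cancel, mul_pow] at h
  refine h.trans ?_
  have e : (4 : ℝ) ^ (K + 1) = 2 ^ (K + 1) * 2 ^ (K + 1) := by rw [← mul_pow]; norm_num
  have h1 : (2 : ℝ) ^ K ≤ 2 ^ (K + 1) := pow_le_pow_right₀ (by norm_num) (by omega)
  have h2 : 0 ≤ (2 : ℝ) ^ (K + 1) * (a ^ (K + 1) + c ^ (K + 1)) := by positivity
  rw [e]
  nlinarith

lemma norm_add_sq_le2 (u v : ℂ) : ‖u + v‖ ^ 2 ≤ 2 * ‖u‖ ^ 2 + 2 * ‖v‖ ^ 2 := by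
  have h := norm_add_le u v
  nlinarith [norm_nonneg (u + v), sq_nonneg (‖u‖ - ‖v‖)]

lemma core (pos : Bool) (K : ℕ) (α : ℝ) (hα : 0 < α) :
    ∃ C : ℝ, 0 < C ∧ ∀ (M : ℕ) (P : Fin M → TrigPoly), (∀ m : Fin M, (P m).sep α) →
      CB (fun x => (∑ m, ‖(P m).eval x‖ ^ 2) ^ (K + 1)) ∧
      ∀ S : ℝ, (∀ y, ∫ x in y..(y + 1), (∑ m, ‖(P m).eval x‖ ^ 2) ^ (K + 1) ≤ S) →
        ∀ y, ∫ x in y..(y + 1), (∑ m, ‖(P m).hilb pos x‖ ^ 2) ^ (K + 1) ≤ C * S := by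
  set b := min 1 (α / 2) with hbdef
  have hb : 0 < b := lt_min one_pos (by linarith)
  have hb1 : b ≤ 1 := min_le_left _ _
  have hbα : b ≤ α / 2 := min_le_right _ _
  obtain ⟨C1, hC1, hloc⟩ := local_bound b hb hb1
  obtain ⟨C2, hC2, hcot⟩ := cotlar b hb hb1 K
  set Q : ℝ := 4 ^ (K + 1) with hQ
  have hQ0 : 0 < Q := by positivity
  refine ⟨4 * (Q * (C2 * (Q * 2) + 1)) * C1, by positivity, fun M P hsep => ?_⟩
  choose p n d ν s hp hn hU hs hev hhi using fun m => decomp pos (P m) α b hα (hsep m) hb hbα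
  have cp : ∀ m, CB (p m) := fun m => UU_CB b (VV_le_UU b (hp m))
  have cn : ∀ m, CB (n m) := fun m => by
    simpa using (UU_CB b (VV_le_UU b (hn m))).star
  have cde : ∀ m, CB (fun x => d m * ee (ν m) x) := fun m => (CB.const (d m)).mul (CB.ee (ν m))
  have cf : ∀ m, CB (fun x => (P m).eval x) := fun m => by
    simp_rw [hev m]; exact ((cp m).add (cn m)).add (cde m)
  have ch : ∀ m, CB (fun x => (P m).hilb pos x) := fun m => by
    simp_rw [hhi m]
    exact ((CB.const (-Complex.I)).mul ((cp m).sub (cn m))).add ((CB.const (-Complex.I * s m)).mul (cde m))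
  have cF := (CB.sum Finset.univ fun m => (cf m).norm.pow 2).pow (K + 1)
  have cH := (CB.sum Finset.univ fun m => (ch m).norm.pow 2).pow (K + 1)
  have cA := (CB.sum Finset.univ fun m => ((cp m).add (cn m)).norm.pow 2).pow (K + 1)
  have cB := (CB.sum Finset.univ fun m => ((cp m).sub (cn m)).norm.pow 2).pow (K + 1)
  refine ⟨cF, fun S hS y => ?_⟩
  set D := ∑ m, ‖d m‖ ^ 2 with hD
  have hD0 : 0 ≤ D := Finset.sum_nonneg fun m _ => sq_nonneg _
  have hF := hloc _ S y cF (fun x => by positivity) hS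
  have hDK := DK b hb hb1 K M y ν d (fun m => p m + n m) (fun m => (cp m).add (cn m)) hU
  simp_rw [← hev] at hDK
  have hcot' := hcot M p n y hp hn
  have hHB : ∀ x, (∑ m, ‖(P m).hilb pos x‖ ^ 2) ^ (K + 1) ≤
      Q * ((∑ m, ‖p m x - n m x‖ ^ 2) ^ (K + 1) + D ^ (K + 1)) := by
    intro x
    refine le_trans (pow_le_pow_left₀ (by positivity) ?_ _) (two_pow_bound _ D (by positivity) hD0 K)
    rw [hD, Finset.mul_sum, Finset.mul_sum, ← Finset.sum_add_distrib]
    refine Finset.sum_le_sum fun m _ => ?_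
    rw [hhi m x]
    refine (norm_add_sq_le2 _ _).trans (le_of_eq ?_)
    simp [hs m, ee_norm]
  have hAF : ∀ x, (∑ m, ‖p m x + n m x‖ ^ 2) ^ (K + 1) ≤
      Q * ((∑ m, ‖(P m).eval x‖ ^ 2) ^ (K + 1) + D ^ (K + 1)) := by
    intro x
    refine le_trans (pow_le_pow_left₀ (by positivity) ?_ _) (two_pow_bound _ D (by positivity) hD0 K)
    rw [hD, Finset.mul_sum, Finset.mul_sum, ← Finset.sum_add_distrib]
    refine Finset.sum_le_sum fun m _ => ?_
    have e : p m x + n m x = (P m).eval x + -(d m * ee (ν m) x) := by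
      rw [hev m x]; simp
    rw [e]
    refine (norm_add_sq_le2 _ _).trans (le_of_eq ?_)
    simp [ee_norm]
  have iF := wW_int_mul b y hb hb1 cF
  have iH := wW_int_mul b y hb hb1 cH
  have iA := wW_int_mul b y hb hb1 cA
  have iB := wW_int_mul b y hb hb1 cB
  have iD := wW_int_mul b y hb hb1 (CB.const (D ^ (K + 1)))
  have mono : ∀ {f g : ℝ → ℝ}, CB f → CB g →
      MeasureTheory.Integrable (fun x => wW b (x - y) * g x) →
      (∀ x, f x ≤ Q * (g x + D ^ (K + 1))) →
      ∫ x, wW b (x - y) * f x ≤ Q * ((∫ x, wW b (x - y) * g x) + (∫ x, wW b (x - y)) * D ^ (K + 1)) := by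
    intro f g hf hg ig hfg
    rw [← MeasureTheory.integral_mul_const, ← MeasureTheory.integral_add ig iD,
      ← MeasureTheory.integral_const_mul]
    refine MeasureTheory.integral_mono (wW_int_mul b y hb hb1 hf) ((ig.add iD).const_mul Q) fun x => ?_
    have := mul_le_mul_of_nonneg_left (hfg x) (wW_nonneg b (x - y))
    simp only [Pi.add_apply]
    linarith
  have h1 := mono cH cB iB hHB
  have h2 := mono cA cF iF hAF
  have h3 : ∫ x in y..(y + 1), (∑ m, ‖(P m).hilb pos x‖ ^ 2) ^ (K + 1) ≤
      4 * ∫ x, wW b (x - y) * (∑ m, ‖(P m).hilb pos x‖ ^ 2) ^ (K + 1) := by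
    calc _ ≤ ∫ x in y..(y + 1), 4 * (wW b (x - y) * (∑ m, ‖(P m).hilb pos x‖ ^ 2) ^ (K + 1)) := by
          refine intervalIntegral.integral_mono_on (by linarith) (cH.1.intervalIntegrable _ _)
            ((iH.const_mul 4).intervalIntegrable) fun x hx => ?_
          have := wW_lower b (x - y) hb hb1 (by linarith [hx.1]) (by linarith [hx.2])
          have h0 : 0 ≤ (∑ m, ‖(P m).hilb pos x‖ ^ 2) ^ (K + 1) := by positivity
          nlinarith
      _ = 4 * ∫ x in Set.Ioc y (y + 1), (wW b (x - y) * (∑ m, ‖(P m).hilb pos x‖ ^ 2) ^ (K + 1)) := by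
          rw [intervalIntegral.integral_const_mul, intervalIntegral.integral_of_le (by linarith)]
      _ ≤ _ := by
          refine mul_le_mul_of_nonneg_left ?_ (by norm_num)
          refine MeasureTheory.setIntegral_le_integral iH (Filter.Eventually.of_forall fun x => ?_)
          have := wW_nonneg b (x - y)
          simp only [Pi.zero_apply]
          positivity
  set IF := ∫ x, wW b (x - y) * (∑ m, ‖(P m).eval x‖ ^ 2) ^ (K + 1)
  set IA := ∫ x, wW b (x - y) * (∑ m, ‖p m x + n m x‖ ^ 2) ^ (K + 1)
  set IB := ∫ x, wW b (x - y) * (∑ m, ‖p m x - n m x‖ ^ 2) ^ (K + 1)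
  set IH := ∫ x, wW b (x - y) * (∑ m, ‖(P m).hilb pos x‖ ^ 2) ^ (K + 1)
  set J := (∫ x, wW b (x - y)) * D ^ (K + 1)
  have hA' : IA ≤ Q * 2 * IF := by nlinarith
  have hB' : IB ≤ C2 * (Q * 2) * IF := by nlinarith
  have hH' : IH ≤ Q * (C2 * (Q * 2) + 1) * IF := by nlinarith
  calc _ ≤ 4 * IH := h3
    _ ≤ 4 * (Q * (C2 * (Q * 2) + 1) * IF) := by linarith
    _ = 4 * (Q * (C2 * (Q * 2) + 1)) * IF := by ring
    _ ≤ 4 * (Q * (C2 * (Q * 2) + 1)) * (C1 * S) := mul_le_mul_of_nonneg_left hF (by positivity)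
    _ = _ := by ring

lemma pow_conv (k : ℕ) (F : ℝ) (hF : 0 ≤ F) :
    |√F| ^ ((2 : ℝ) ^ (k + 1)) = F ^ (2 ^ k - 1 + 1) := by
  rw [abs_of_nonneg (Real.sqrt_nonneg _), Nat.sub_add_cancel Nat.one_le_two_pow]
  have : ((2 : ℝ) ^ (k + 1)) = ((2 * 2 ^ k : ℕ) : ℝ) := by push_cast; ring
  rw [this, Real.rpow_natCast, pow_mul, Real.sq_sqrt hF]

/-- Vector-valued `S^{2^k}` bound for the modified Hilbert transforms: for every `k ≥ 1` and
`α > 0` there is a constant `C = C(k, α) > 0` such that for each finite family of `α`-separated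
trigonometric polynomials `f_1, …, f_M`,
`‖(Σ_m |H_± f_m|²)^{1/2}‖_{S^{2^k}} ≤ C ‖(Σ_m |f_m|²)^{1/2}‖_{S^{2^k}}`. -/
theorem stmt_9 (pos : Bool) (k : ℕ) (hk : 1 ≤ k) (α : ℝ) (hα : 0 < α) :
    ∃ C : ℝ, 0 < C ∧ ∀ (M : ℕ) (P : Fin M → TrigPoly), (∀ m : Fin M, (P m).sep α) →
      stepanovNorm ((2 : ℝ) ^ k)
          (fun s => Real.sqrt (∑ m : Fin M, ‖TrigPoly.hilb pos (P m) s‖ ^ 2))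
        ≤ C * stepanovNorm ((2 : ℝ) ^ k)
            (fun s => Real.sqrt (∑ m : Fin M, ‖(P m).eval s‖ ^ 2)) := by
  obtain ⟨k, rfl⟩ : ∃ j, k = j + 1 := ⟨k - 1, by omega⟩
  obtain ⟨C, hC, hcore⟩ := core pos (2 ^ k - 1) α hα
  refine ⟨C ^ (1 / (2 : ℝ) ^ (k + 1)), by positivity, fun M P hsep => ?_⟩
  obtain ⟨cF, hmain⟩ := hcore M P hsep
  unfold stepanovNorm
  have e1 : ∀ s, |√(∑ m : Fin M, ‖TrigPoly.hilb pos (P m) s‖ ^ 2)| ^ ((2 : ℝ) ^ (k + 1))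
    = (∑ m : Fin M, ‖TrigPoly.hilb pos (P m) s‖ ^ 2) ^ (2 ^ k - 1 + 1) :=
    fun s => pow_conv k _ (by positivity)
  have e2 : ∀ s, |√(∑ m : Fin M, ‖(P m).eval s‖ ^ 2)| ^ ((2 : ℝ) ^ (k + 1))
    = (∑ m : Fin M, ‖(P m).eval s‖ ^ 2) ^ (2 ^ k - 1 + 1) :=
    fun s => pow_conv k _ (by positivity)
  simp_rw [e1, e2]
  have hbdd : BddAbove (Set.range fun x : ℝ =>
      ∫ s in x..(x + 1), (∑ m : Fin M, ‖(P m).eval s‖ ^ 2) ^ (2 ^ k - 1 + 1)) := by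
    obtain ⟨_, B, hB⟩ := cF
    refine ⟨B, ?_⟩
    rintro _ ⟨x, rfl⟩
    have := intervalIntegral.norm_integral_le_of_norm_le_const (a := x) (b := x + 1)
      (fun s _ => hB s)
    simp only [add_sub_cancel_left, abs_one, mul_one] at this
    exact (Real.le_norm_self _).trans this
  set S := ⨆ x : ℝ, ∫ s in x..(x + 1), (∑ m : Fin M, ‖(P m).eval s‖ ^ 2) ^ (2 ^ k - 1 + 1) with hS
  have hle := hmain S (fun y => le_ciSup hbdd y)
  have hS0 : 0 ≤ S := Real.iSup_nonneg fun x =>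
    intervalIntegral.integral_nonneg (by linarith) fun s _ => by positivity
  rw [← Real.mul_rpow hC.le hS0]
  refine Real.rpow_le_rpow (Real.iSup_nonneg fun x =>
    intervalIntegral.integral_nonneg (by linarith) fun s _ => by positivity) (ciSup_le hle) (by positivity)
end

section
/- Fix a sign choice ±. For every k ∈ ℕ (k ≥ 1) and every α > 0, there exists a constant C = C(k, α) > 0 such that for every α-separated trigonometric polynomial f, ‖H_± f‖_{S^{2^k}} ≤ C ‖f‖_{S^{2^k}}. -/
open MeasureTheory Real
open scoped FourierTransform SchwartzMap

noncomputable def tpS {ι : Type} (s : Finset ι) (c : ι → ℂ) (l : ι → ℝ) (x : ℝ) : ℂ :=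
  ∑ i ∈ s, c i * Complex.exp (Complex.I * (l i : ℂ) * (x : ℂ))

noncomputable def bmp (ρ : ℝ) (hρ : 0 < ρ) (a : ℝ) : ContDiffBump a :=
  ⟨ρ / 2, ρ, by positivity, by linarith⟩

noncomputable def bS (ρ : ℝ) (hρ : 0 < ρ) (a : ℝ) : 𝓢(ℝ, ℂ) :=
  HasCompactSupport.toSchwartzMap (f := fun x => ((bmp ρ hρ a x : ℝ) : ℂ))
    ((bmp ρ hρ a).hasCompactSupport.comp_left (g := fun r : ℝ => (r : ℂ)) (by simp))
    (Complex.ofRealCLM.contDiff.comp (bmp ρ hρ a).contDiff)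

lemma bS_apply (ρ : ℝ) (hρ : 0 < ρ) (a x : ℝ) : bS ρ hρ a x = ((bmp ρ hρ a x : ℝ) : ℂ) := rfl

lemma bS_shift (ρ : ℝ) (hρ : 0 < ρ) (a x : ℝ) : bS ρ hρ a x = bS ρ hρ 0 (x - a) := by
  rw [bS_apply, bS_apply, ContDiffBump.apply, ContDiffBump.apply]
  simp [bmp]

lemma fourier_bS (ρ : ℝ) (hρ : 0 < ρ) (l x : ℝ) :
    (𝓕 (bS ρ hρ (-(l / (2 * π))))) x
      = Complex.exp (Complex.I * (l : ℂ) * (x : ℂ)) * (𝓕 (bS ρ hρ 0)) x := by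
  rw [SchwartzMap.fourier_coe, SchwartzMap.fourier_coe, Real.fourier_real_eq_integral_exp_smul,
    Real.fourier_real_eq_integral_exp_smul, ← integral_const_mul,
    ← integral_add_right_eq_self _ (-(l / (2 * π)))]
  congr 1
  ext v
  rw [bS_shift, smul_eq_mul, smul_eq_mul, ← mul_assoc, ← Complex.exp_add]
  congr 2
  · push_cast
    have : (π : ℂ) ≠ 0 := by exact_mod_cast pi_ne_zero
    field_simp
    ring
  · simp

lemma bS_zero (ρ : ℝ) (hρ : 0 < ρ) (a x : ℝ) (h : ρ ≤ |x - a|) : bS ρ hρ a x = 0 := by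
  rw [bS_apply, ContDiffBump.zero_of_le_dist]
  · simp
  · exact h

lemma fourier_sum {ι : Type} (ρ : ℝ) (hρ : 0 < ρ) (s : Finset ι) (c : ι → ℂ) (l : ι → ℝ) (x : ℝ) :
    (𝓕 (∑ i ∈ s, c i • bS ρ hρ (-(l i / (2 * π))))) x = (𝓕 (bS ρ hρ 0)) x * tpS s c l x := by
  rw [← SchwartzMap.fourierTransformCLM_apply (𝕜 := ℂ), map_sum, _root_.sum_apply, tpS, Finset.mul_sum]
  refine Finset.sum_congr rfl fun i _ => ?_
  rw [map_smul, _root_.smul_apply, SchwartzMap.fourierTransformCLM_apply, fourier_bS, smul_eq_mul]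
  ring

lemma planch {ι κ : Type} (δ ρ : ℝ) (hρ : 0 < ρ) (hd : 2 * π * ρ ≤ δ)
    (s : Finset ι) (c : ι → ℂ) (l : ι → ℝ) (hl : ∀ i ∈ s, δ ≤ l i)
    (r : Finset κ) (d : κ → ℂ) (m : κ → ℝ) (hm : ∀ i ∈ r, m i ≤ -δ) :
    ∫ x, ‖(𝓕 (bS ρ hρ 0)) x * (tpS s c l x - tpS r d m x)‖ ^ 2
      = ∫ x, ‖(𝓕 (bS ρ hρ 0)) x * (tpS s c l x + tpS r d m x)‖ ^ 2 := by
  set U := ∑ i ∈ s, c i • bS ρ hρ (-(l i / (2 * π)))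
  set V := ∑ i ∈ r, d i • bS ρ hρ (-(m i / (2 * π)))
  have h1 := SchwartzMap.integral_norm_sq_fourier (U - V)
  have h2 := SchwartzMap.integral_norm_sq_fourier (U + V)
  have e1 : ∀ x, (𝓕 (U - V)) x = (𝓕 (bS ρ hρ 0)) x * (tpS s c l x - tpS r d m x) := by
    intro x
    rw [← SchwartzMap.fourierTransformCLM_apply (𝕜 := ℂ), map_sub, _root_.sub_apply, SchwartzMap.fourierTransformCLM_apply,
      SchwartzMap.fourierTransformCLM_apply, fourier_sum, fourier_sum, mul_sub]
  have e2 : ∀ x, (𝓕 (U + V)) x = (𝓕 (bS ρ hρ 0)) x * (tpS s c l x + tpS r d m x) := by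
    intro x
    rw [← SchwartzMap.fourierTransformCLM_apply (𝕜 := ℂ), map_add, _root_.add_apply, SchwartzMap.fourierTransformCLM_apply,
      SchwartzMap.fourierTransformCLM_apply, fourier_sum, fourier_sum, mul_add]
  simp_rw [e1] at h1
  simp_rw [e2] at h2
  rw [h1, h2]
  congr 1
  ext x
  have hp := pi_pos
  have hρ' : ρ ≤ δ / (2 * π) := by rw [le_div_iff₀ (by positivity)]; linarith
  rw [_root_.sub_apply, _root_.add_apply]
  rcases le_total 0 x with hx | hx
  · have : U x = 0 := by
      rw [_root_.sum_apply]
      refine Finset.sum_eq_zero fun i hi => ?_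
      rw [_root_.smul_apply, bS_zero, smul_zero]
      refine le_trans ?_ (le_abs_self _)
      have : δ / (2 * π) ≤ l i / (2 * π) := by gcongr; exact hl i hi
      linarith
    rw [this]; simp
  · have : V x = 0 := by
      rw [_root_.sum_apply]
      refine Finset.sum_eq_zero fun i hi => ?_
      rw [_root_.smul_apply, bS_zero, smul_zero]
      refine le_trans ?_ (neg_le_abs _)
      have : m i / (2 * π) ≤ -δ / (2 * π) := by gcongr; exact hm i hi
      rw [neg_div] at this
      linarith
    rw [this]; simp

lemma phi_lower (ρ : ℝ) (hρ : 0 < ρ) (h8 : ρ ≤ 1 / 8) :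
    ∃ c : ℝ, 0 < c ∧ ∀ x ∈ Set.Icc (0:ℝ) 1, c ≤ ‖(𝓕 (bS ρ hρ 0)) x‖ ^ 2 := by
  have hcont : Continuous fun x => ‖(𝓕 (bS ρ hρ 0)) x‖ ^ 2 :=
    (𝓕 (bS ρ hρ 0)).continuous.norm.pow 2
  obtain ⟨x0, hx0, hmin⟩ := isCompact_Icc.exists_isMinOn (s := Set.Icc (0:ℝ) 1) ⟨0, by simp⟩ hcont.continuousOn
  refine ⟨_, ?_, fun x hx => hmin hx⟩
  have key : 0 < ((𝓕 (bS ρ hρ 0)) x0).re := by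
    rw [SchwartzMap.fourier_coe, Real.fourier_real_eq_integral_exp_smul]
    have hint : Integrable fun v : ℝ => Complex.exp (↑(-2 * π * v * x0) * Complex.I) • bS ρ hρ 0 v := by
      refine Integrable.mono' (bS ρ hρ 0).integrable.norm (Continuous.aestronglyMeasurable ?_) ?_
      · have h1 : Continuous fun v : ℝ => Complex.exp (↑(-2 * π * v * x0) * Complex.I) := by fun_prop
        exact h1.smul (bS ρ hρ 0).continuous
      · refine Filter.Eventually.of_forall fun v => ?_
        rw [norm_smul, Complex.norm_exp_ofReal_mul_I, one_mul]
    have : (∫ v : ℝ, Complex.exp (↑(-2 * π * v * x0) * Complex.I) • bS ρ hρ 0 v).re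
        = ∫ v : ℝ, (Complex.exp (↑(-2 * π * v * x0) * Complex.I) • bS ρ hρ 0 v).re :=
      (integral_re hint).symm
    rw [this]
    have e : ∀ v : ℝ, (Complex.exp (↑(-2 * π * v * x0) * Complex.I) • bS ρ hρ 0 v).re
        = Real.cos (-2 * π * v * x0) * bmp ρ hρ 0 v := by
      intro v
      rw [bS_apply, smul_eq_mul, Complex.re_mul_ofReal, Complex.exp_ofReal_mul_I_re]
    simp_rw [e]
    refine Continuous.integral_pos_of_hasCompactSupport_nonneg_nonzero (x := 0) ?_ ?_ ?_ ?_
    · exact Continuous.mul (by fun_prop) (bmp ρ hρ 0).continuous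
    · exact (bmp ρ hρ 0).hasCompactSupport.mul_left
    · intro v
      by_cases hv : |v| < ρ
      · refine mul_nonneg (Real.cos_nonneg_of_mem_Icc ?_) (bmp ρ hρ 0).nonneg
        have hp := pi_pos
        have h1 : |v * x0| ≤ 1 / 8 := by
          rw [abs_mul, abs_of_nonneg hx0.1]
          nlinarith [abs_nonneg v, hx0.1, hx0.2]
        rw [abs_le] at h1
        constructor <;> nlinarith
      · have : bmp ρ hρ 0 v = 0 := by
          apply ContDiffBump.zero_of_le_dist
          simpa [bmp] using hv
        simp [this]
    · have : bmp ρ hρ 0 0 = 1 := by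
        apply ContDiffBump.one_of_mem_closedBall
        simp only [bmp, Metric.mem_closedBall, dist_self]
        positivity
      simp [this]
  have : (𝓕 (bS ρ hρ 0)) x0 ≠ 0 := by
    intro h; rw [h] at key; simp at key
  positivity

lemma phi_upper (φ : 𝓢(ℝ, ℂ)) : ∃ K : ℝ, 0 < K ∧ ∀ x, ‖φ x‖ ^ 2 ≤ K / (1 + x ^ 2) := by
  obtain ⟨A, hA0, hA⟩ := φ.decay 0 0
  obtain ⟨B, hB0, hB⟩ := φ.decay 1 0
  refine ⟨A ^ 2 + B ^ 2, by positivity, fun x => ?_⟩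
  have a := hA x
  have b := hB x
  simp at a b
  rw [le_div_iff₀ (by positivity)]
  have h1 : ‖φ x‖ ^ 2 ≤ A ^ 2 := by gcongr
  have h2 : (|x| * ‖φ x‖) ^ 2 ≤ B ^ 2 := by gcongr
  rw [mul_pow, sq_abs] at h2
  linarith

lemma tpS_cont {ι : Type} (s : Finset ι) (c : ι → ℂ) (l : ι → ℝ) : Continuous (tpS s c l) := by
  unfold tpS; fun_prop

lemma tpS_bdd {ι : Type} (s : Finset ι) (c : ι → ℂ) (l : ι → ℝ) (x : ℝ) :
    ‖tpS s c l x‖ ≤ ∑ i ∈ s, ‖c i‖ := by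
  unfold tpS
  refine (norm_sum_le _ _).trans (Finset.sum_le_sum fun i _ => ?_)
  rw [norm_mul, mul_assoc, ← Complex.ofReal_mul, Complex.norm_exp_I_mul_ofReal, mul_one]

lemma tpS_shift {ι : Type} (s : Finset ι) (c : ι → ℂ) (l : ι → ℝ) (t x : ℝ) :
    tpS s c l (x + t) = tpS s (fun i => c i * Complex.exp (Complex.I * (l i : ℂ) * (t : ℂ))) l x := by
  unfold tpS
  refine Finset.sum_congr rfl fun i _ => ?_
  rw [mul_assoc (c i), ← Complex.exp_add]
  push_cast
  ring_nf

lemma tpS_mul {ι : Type} (s : Finset ι) (c : ι → ℂ) (l : ι → ℝ) (a : ℂ) (x : ℝ) :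
    tpS (s ×ˢ s) (fun q : ι × ι => a * (c q.1 * c q.2)) (fun q => l q.1 + l q.2) x
      = a * tpS s c l x ^ 2 := by
  unfold tpS
  rw [sq, Finset.sum_mul_sum, Finset.sum_product, Finset.mul_sum]
  refine Finset.sum_congr rfl fun i _ => ?_
  rw [Finset.mul_sum]
  refine Finset.sum_congr rfl fun j _ => ?_
  have : Complex.exp (Complex.I * ((l i + l j : ℝ) : ℂ) * (x : ℂ))
    = Complex.exp (Complex.I * (l i : ℂ) * (x : ℂ)) * Complex.exp (Complex.I * (l j : ℂ) * (x : ℂ)) := by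
    rw [← Complex.exp_add]; push_cast; ring_nf
  rw [this]; ring

lemma int_wt (φ F : ℝ → ℂ) (hφ : Continuous φ) (hF : Continuous F) (K R : ℝ)
    (hK : ∀ x, ‖φ x‖ ^ 2 ≤ K / (1 + x ^ 2)) (hR : ∀ x, ‖F x‖ ≤ R) :
    Integrable fun x => ‖φ x * F x‖ ^ 2 := by
  refine Integrable.mono' (integrable_inv_one_add_sq.const_mul (K * R ^ 2))
    (Continuous.aestronglyMeasurable (by fun_prop)) (Filter.Eventually.of_forall fun x => ?_)
  rw [Real.norm_of_nonneg (by positivity), norm_mul, mul_pow]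
  have h1 := hK x
  have h2 : ‖F x‖ ^ 2 ≤ R ^ 2 := by gcongr; exact hR x
  calc _ ≤ K / (1 + x ^ 2) * R ^ 2 := by
        apply mul_le_mul h1 h2 (by positivity) ((by positivity : (0:ℝ) ≤ ‖φ x‖ ^ 2).trans h1)
    _ = _ := by ring

lemma summ_int : Summable fun n : ℤ => 1 / (1 + (n:ℝ) ^ 2) := by
  refine Summable.of_norm_bounded_eventually (Real.summable_one_div_int_pow.2 (by norm_num : 1 < 2)) ?_
  rw [Filter.eventually_cofinite]
  refine (Set.finite_singleton (0:ℤ)).subset fun n hn => ?_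
  by_contra h
  apply hn
  have : (n:ℝ) ≠ 0 := by simpa using h
  rw [Real.norm_of_nonneg (by positivity)]
  gcongr
  linarith

lemma wt_bound (K : ℝ) (hK0 : 0 < K) : ∃ D : ℝ, 0 < D ∧ ∀ (φ F : ℝ → ℂ), Continuous φ → Continuous F →
    (∀ x, ‖φ x‖ ^ 2 ≤ K / (1 + x ^ 2)) → ∀ R : ℝ, (∀ x, ‖F x‖ ≤ R) → ∀ M : ℝ,
    (∀ x : ℝ, ∫ s in x..(x + 1), ‖F s‖ ^ 2 ≤ M) → ∫ x, ‖φ x * F x‖ ^ 2 ≤ D * M := by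
  set S := ∑' n : ℤ, 1 / (1 + (n:ℝ) ^ 2)
  have hS : 0 < S := summ_int.tsum_pos (fun n => by positivity) 0 (by simp)
  refine ⟨3 * K * S, by positivity, fun φ F hφ hF hK R hR M hM => ?_⟩
  have hi := int_wt φ F hφ hF K R hK hR
  have hsum := hasSum_integral_iUnion (μ := volume) (s := fun n : ℤ => Set.Ioc (n:ℝ) (n + 1))
    (f := fun x => ‖φ x * F x‖ ^ 2) (fun n => measurableSet_Ioc) (Set.pairwise_disjoint_Ioc_intCast ℝ) hi.integrableOn
  rw [iUnion_Ioc_intCast, setIntegral_univ] at hsum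
  have hs2 : HasSum (fun n : ℤ => 3 * K * M * (1 / (1 + (n:ℝ) ^ 2))) (3 * K * M * S) :=
    summ_int.hasSum.mul_left _
  refine (hasSum_le (fun n => ?_) hsum hs2).trans (le_of_eq (by ring))
  calc ∫ x in Set.Ioc (n:ℝ) (n + 1), ‖φ x * F x‖ ^ 2
      ≤ ∫ x in Set.Ioc (n:ℝ) (n + 1), 3 * K / (1 + (n:ℝ) ^ 2) * ‖F x‖ ^ 2 := by
        refine setIntegral_mono_on hi.integrableOn ?_ measurableSet_Ioc fun x hx => ?_
        · exact (Continuous.integrableOn_Icc (by fun_prop)).mono_set Set.Ioc_subset_Icc_self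
        · rw [norm_mul, mul_pow]
          gcongr
          refine (hK x).trans ?_
          rw [div_le_div_iff₀ (by positivity) (by positivity)]
          have : 1 + (n:ℝ) ^ 2 ≤ 3 * (1 + x ^ 2) := by
            have h1 : (x - n) ^ 2 ≤ 1 := by nlinarith [hx.1, hx.2]
            nlinarith [sq_nonneg x, sq_nonneg (2 * x - n)]
          nlinarith
    _ = 3 * K / (1 + (n:ℝ) ^ 2) * ∫ x in (n:ℝ)..(n + 1), ‖F x‖ ^ 2 := by
        rw [integral_const_mul, intervalIntegral.integral_of_le (by linarith)]
    _ ≤ 3 * K / (1 + (n:ℝ) ^ 2) * M := by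
        gcongr; exact hM n
    _ = _ := by ring

def Bd (δ : ℝ) (p : ℕ) : Prop := ∃ C : ℝ, 0 < C ∧ ∀ (ι κ : Type)
    (s : Finset ι) (c : ι → ℂ) (l : ι → ℝ) (_ : ∀ i ∈ s, δ ≤ l i)
    (r : Finset κ) (d : κ → ℂ) (m : κ → ℝ) (_ : ∀ i ∈ r, m i ≤ -δ) (M : ℝ),
    (∀ x : ℝ, ∫ y in x..(x + 1), ‖tpS s c l y + tpS r d m y‖ ^ p ≤ M) →
    ∀ x : ℝ, ∫ y in x..(x + 1), ‖tpS s c l y - tpS r d m y‖ ^ p ≤ C * M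

lemma Bd_two (δ : ℝ) (hδ : 0 < δ) : Bd δ 2 := by
  have hp := pi_pos
  obtain ⟨ρ, hρ, h8, hd⟩ : ∃ ρ : ℝ, 0 < ρ ∧ ρ ≤ 1 / 8 ∧ 2 * π * ρ ≤ δ := by
    refine ⟨min (1 / 8) (δ / (2 * π)), by positivity, min_le_left _ _, ?_⟩
    have := min_le_right (1 / 8) (δ / (2 * π))
    rw [le_div_iff₀ (by positivity)] at this
    linarith
  obtain ⟨c0, hc0, hlow⟩ := phi_lower ρ hρ h8
  obtain ⟨K, hK0, hK⟩ := phi_upper (𝓕 (bS ρ hρ 0))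
  obtain ⟨D, hD, hDb⟩ := wt_bound K hK0
  have hφ : Continuous (fun x => (𝓕 (bS ρ hρ 0)) x) := (𝓕 (bS ρ hρ 0)).continuous
  refine ⟨D / c0, by positivity, fun ι κ s c l hl r d m hm M hM x => ?_⟩
  set c' := fun i => c i * Complex.exp (Complex.I * (l i : ℂ) * (x : ℂ))
  set d' := fun i => d i * Complex.exp (Complex.I * (m i : ℂ) * (x : ℂ))
  have hpl := planch δ ρ hρ hd s c' l hl r d' m hm
  have h1 := hDb (fun x => (𝓕 (bS ρ hρ 0)) x) (fun y => tpS s c' l y + tpS r d' m y) hφ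
    ((tpS_cont _ _ _).add (tpS_cont _ _ _)) hK (∑ i ∈ s, ‖c' i‖ + ∑ i ∈ r, ‖d' i‖)
    (fun y => (norm_add_le _ _).trans (add_le_add (tpS_bdd _ _ _ _) (tpS_bdd _ _ _ _))) M (by
      intro z
      refine le_trans (le_of_eq ?_) (hM (z + x))
      simp_rw [c', d', ← tpS_shift]
      rw [intervalIntegral.integral_comp_add_right (fun y => ‖tpS s c l y + tpS r d m y‖ ^ 2)]
      congr 1; ring)
  rw [← hpl] at h1
  have hi := int_wt (fun x => (𝓕 (bS ρ hρ 0)) x) (fun y => tpS s c' l y - tpS r d' m y) hφ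
    ((tpS_cont _ _ _).sub (tpS_cont _ _ _)) K (∑ i ∈ s, ‖c' i‖ + ∑ i ∈ r, ‖d' i‖) hK
    (fun y => (norm_sub_le _ _).trans (add_le_add (tpS_bdd _ _ _ _) (tpS_bdd _ _ _ _)))
  have hc : Continuous fun y => ‖tpS s c' l y - tpS r d' m y‖ ^ 2 :=
    ((tpS_cont _ _ _).sub (tpS_cont _ _ _)).norm.pow 2
  have e : ∫ y in x..(x + 1), ‖tpS s c l y - tpS r d m y‖ ^ 2
      = ∫ y in Set.Ioc (0:ℝ) 1, ‖tpS s c' l y - tpS r d' m y‖ ^ 2 := by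
    rw [← intervalIntegral.integral_of_le zero_le_one]
    simp_rw [c', d', ← tpS_shift]
    rw [intervalIntegral.integral_comp_add_right (fun y => ‖tpS s c l y - tpS r d m y‖ ^ 2)]
    congr 1 <;> ring
  rw [e, div_mul_eq_mul_div, le_div_iff₀ hc0, mul_comm, ← integral_const_mul]
  refine le_trans ?_ ((setIntegral_le_integral hi
    (Filter.Eventually.of_forall fun y => by positivity) (s := Set.Ioc (0:ℝ) 1)).trans h1)
  refine setIntegral_mono_on ?_ hi.integrableOn measurableSet_Ioc fun y hy => ?_
  · exact ((hc.const_mul c0).integrableOn_Icc).mono_set Set.Ioc_subset_Icc_self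
  · rw [norm_mul, mul_pow]
    gcongr
    exact hlow y ⟨hy.1.le, hy.2⟩

lemma Bd_step (δ : ℝ) (hδ : 0 < δ) (p : ℕ) (h : Bd δ p) : Bd δ (2 * p) := by
  obtain ⟨C, hC, hB⟩ := h
  set K : ℝ := 2 ^ (2 * p)
  have hK : 0 < K := by positivity
  refine ⟨K ^ 2 * C ^ 2 + 2 * K, by positivity, fun ι κ s c l hl r d m hm M hM => ?_⟩
  set u := tpS s c l
  set v := tpS r d m
  have hu : Continuous u := tpS_cont _ _ _
  have hv : Continuous v := tpS_cont _ _ _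
  set R := ∑ i ∈ s, ‖c i‖ + ∑ i ∈ r, ‖d i‖
  have hR : ∀ y, ‖u y - v y‖ ≤ R :=
    fun y => (norm_sub_le _ _).trans (add_le_add (tpS_bdd _ _ _ _) (tpS_bdd _ _ _ _))
  have hbdd : BddAbove (Set.range fun x : ℝ => ∫ y in x..(x + 1), ‖u y - v y‖ ^ (2 * p)) := by
    refine ⟨R ^ (2 * p), ?_⟩
    rintro _ ⟨x, rfl⟩
    calc ∫ y in x..(x + 1), ‖u y - v y‖ ^ (2 * p) ≤ ∫ y in x..(x + 1), R ^ (2 * p) := by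
          refine intervalIntegral.integral_mono_on (by linarith) ?_ ?_ fun y _ => ?_
          · exact Continuous.intervalIntegrable (by fun_prop) _ _
          · exact Continuous.intervalIntegrable (by fun_prop) _ _
          · gcongr; exact hR y
      _ = _ := by simp
  set N := ⨆ x : ℝ, ∫ y in x..(x + 1), ‖u y - v y‖ ^ (2 * p)
  have hN : ∀ x : ℝ, ∫ y in x..(x + 1), ‖u y - v y‖ ^ (2 * p) ≤ N := fun x => le_ciSup hbdd x
  suffices hfin : N ≤ (K ^ 2 * C ^ 2 + 2 * K) * M from fun x => (hN x).trans hfin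
  set t : ℝ := K * C
  have ht : 0 < t := by positivity
  have hprod := hB (ι × ι) (κ × κ) (s ×ˢ s) (fun q => 1 * (c q.1 * c q.2)) (fun q => l q.1 + l q.2)
    (by
      rintro ⟨i, j⟩ hij
      rw [Finset.mem_product] at hij
      have := hl i hij.1; have := hl j hij.2
      dsimp only at *; linarith)
    (r ×ˢ r) (fun q => (-1) * (d q.1 * d q.2)) (fun q => m q.1 + m q.2)
    (by
      rintro ⟨i, j⟩ hij
      rw [Finset.mem_product] at hij
      have := hm i hij.1; have := hm j hij.2
      dsimp only at *; linarith)
    ((t * M + t⁻¹ * N) / 2)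
    (by
      intro x
      simp_rw [tpS_mul]
      calc ∫ y in x..(x + 1), ‖1 * u y ^ 2 + -1 * v y ^ 2‖ ^ p
          ≤ ∫ y in x..(x + 1), (t / 2 * ‖u y + v y‖ ^ (2 * p) + t⁻¹ / 2 * ‖u y - v y‖ ^ (2 * p)) := by
            refine intervalIntegral.integral_mono_on (by linarith) ?_ ?_ fun y _ => ?_
            · exact Continuous.intervalIntegrable (by fun_prop) _ _
            · exact Continuous.intervalIntegrable (by fun_prop) _ _
            · have e : 1 * u y ^ 2 + -1 * v y ^ 2 = (u y + v y) * (u y - v y) := by ring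
              rw [e, norm_mul, mul_pow, mul_comm 2 p, pow_mul, pow_mul]
              set a := ‖u y + v y‖ ^ p
              set b := ‖u y - v y‖ ^ p
              have : t / 2 * a ^ 2 + t⁻¹ / 2 * b ^ 2 - a * b = t⁻¹ / 2 * (t * a - b) ^ 2 := by
                field_simp; ring
              have : 0 ≤ t⁻¹ / 2 * (t * a - b) ^ 2 := by positivity
              linarith
        _ = t / 2 * (∫ y in x..(x + 1), ‖u y + v y‖ ^ (2 * p))
            + t⁻¹ / 2 * ∫ y in x..(x + 1), ‖u y - v y‖ ^ (2 * p) := by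
            rw [intervalIntegral.integral_add, intervalIntegral.integral_const_mul,
              intervalIntegral.integral_const_mul]
            · exact Continuous.intervalIntegrable (by fun_prop) _ _
            · exact Continuous.intervalIntegrable (by fun_prop) _ _
        _ ≤ t / 2 * M + t⁻¹ / 2 * N := by
            gcongr
            · exact hM x
            · exact hN x
        _ = _ := by ring)
  simp_rw [tpS_mul] at hprod
  have hmain : N ≤ K * (C * ((t * M + t⁻¹ * N) / 2)) + K * M := by
    refine ciSup_le fun x => ?_
    calc ∫ y in x..(x + 1), ‖u y - v y‖ ^ (2 * p)
        ≤ ∫ y in x..(x + 1), (K * ‖1 * u y ^ 2 - -1 * v y ^ 2‖ ^ p + K * ‖u y + v y‖ ^ (2 * p)) := by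
          refine intervalIntegral.integral_mono_on (by linarith) ?_ ?_ fun y _ => ?_
          · exact Continuous.intervalIntegrable (by fun_prop) _ _
          · exact Continuous.intervalIntegrable (by fun_prop) _ _
          · set w := 1 * u y ^ 2 - -1 * v y ^ 2 with hw
            have e : (u y - v y) ^ 2 = 2 * w - (u y + v y) ^ 2 := by rw [hw]; ring
            have h1 : ‖u y - v y‖ ^ 2 ≤ 2 * ‖w‖ + ‖u y + v y‖ ^ 2 := by
              rw [← norm_pow, e]
              refine (norm_sub_le _ _).trans ?_
              simp
            rw [pow_mul, pow_mul]
            set b := ‖u y + v y‖ ^ 2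
            have hb : 0 ≤ b := by positivity
            have hw0 := norm_nonneg w
            have hKe : K = 4 ^ p := by simp only [K]; rw [pow_mul]; norm_num
            rw [hKe, ← mul_pow, ← mul_pow]
            rcases le_total ‖w‖ b with hwb | hwb
            · calc _ ≤ (4 * b) ^ p := by gcongr; linarith
                _ ≤ _ := by linarith [pow_nonneg (by positivity : 0 ≤ 4 * ‖w‖) p]
            · calc _ ≤ (4 * ‖w‖) ^ p := by gcongr; linarith
                _ ≤ _ := by linarith [pow_nonneg (by positivity : 0 ≤ 4 * b) p]
      _ = K * (∫ y in x..(x + 1), ‖1 * u y ^ 2 - -1 * v y ^ 2‖ ^ p)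
            + K * ∫ y in x..(x + 1), ‖u y + v y‖ ^ (2 * p) := by
            rw [intervalIntegral.integral_add, intervalIntegral.integral_const_mul,
              intervalIntegral.integral_const_mul]
            · exact Continuous.intervalIntegrable (by fun_prop) _ _
            · exact Continuous.intervalIntegrable (by fun_prop) _ _
      _ ≤ _ := by
            gcongr
            · exact hprod x
            · exact hM x
  have e : K * (C * ((t * M + t⁻¹ * N) / 2)) + K * M = (K ^ 2 * C ^ 2 * M + N) / 2 + K * M := by
    simp only [t]; field_simp
  rw [e] at hmain
  linarith

lemma Bd_all (δ : ℝ) (hδ : 0 < δ) (k : ℕ) : Bd δ (2 ^ (k + 1)) := by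
  induction k with
  | zero => simpa using Bd_two δ hδ
  | succ k ih => rw [pow_succ']; exact Bd_step δ hδ _ ih

lemma sgnPM_cases (pos : Bool) (x : ℝ) : sgnPM pos x = 1 ∨ sgnPM pos x = -1 := by
  unfold sgnPM; split_ifs <;> simp

lemma sgnPM_lt (pos : Bool) (x y : ℝ) (hx : sgnPM pos x = 1) (hy : sgnPM pos y ≠ 1) : y < x := by
  by_contra! h
  apply hy
  unfold sgnPM at *
  split_ifs at * <;> first | rfl | linarith

lemma P_mono (P : TrigPoly) (n m : ℕ) (h : n ≤ m) (hm : m < P.N) : P.Λ n ≤ P.Λ m := by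
  induction m, h using Nat.le_induction with
  | base => exact le_rfl
  | succ m _ ih => exact (ih (by omega)).trans (P.mono m hm).le

lemma exists_cut (P : TrigPoly) (α : ℝ) (hs : P.sep α) (pos : Bool) :
    ∃ t : ℝ, (∀ n ∈ (Finset.range P.N).filter (fun n => sgnPM pos (P.Λ n) = 1), α / 2 ≤ P.Λ n - t) ∧
      ∀ n ∈ (Finset.range P.N).filter (fun n => ¬ sgnPM pos (P.Λ n) = 1), P.Λ n - t ≤ -(α / 2) := by
  set A := (Finset.range P.N).filter (fun n => sgnPM pos (P.Λ n) = 1) with hA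
  set B := (Finset.range P.N).filter (fun n => ¬ sgnPM pos (P.Λ n) = 1) with hB
  have key : ∀ a ∈ A, ∀ b ∈ B, P.Λ b + α ≤ P.Λ a := by
    intro a ha b hb
    rw [hA, Finset.mem_filter, Finset.mem_range] at ha
    rw [hB, Finset.mem_filter, Finset.mem_range] at hb
    have hlt := sgnPM_lt pos _ _ ha.2 hb.2
    have hab : b < a := by
      by_contra! h
      linarith [P_mono P a b h hb.1]
    have h1 := hs b (by omega)
    have h2 := P_mono P (b + 1) a hab ha.1
    linarith
  by_cases hBn : B.Nonempty
  · obtain ⟨b, hb, hmax⟩ := B.exists_max_image P.Λ hBn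
    refine ⟨P.Λ b + α / 2, fun n hn => ?_, fun n hn => ?_⟩
    · linarith [key n hn b hb]
    · linarith [hmax n hn]
  · rw [Finset.not_nonempty_iff_eq_empty] at hBn
    rw [hBn]
    by_cases hAn : A.Nonempty
    · obtain ⟨a, ha, hmin⟩ := A.exists_min_image P.Λ hAn
      exact ⟨P.Λ a - α / 2, fun n hn => by linarith [hmin n hn], by simp⟩
    · rw [Finset.not_nonempty_iff_eq_empty] at hAn
      rw [hAn]
      exact ⟨0, by simp, by simp⟩

lemma eval_split (P : TrigPoly) (pos : Bool) (t x : ℝ) :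
    P.eval x = Complex.exp (((t * x : ℝ) : ℂ) * Complex.I) *
      (tpS ((Finset.range P.N).filter (fun n => sgnPM pos (P.Λ n) = 1)) P.c (fun n => P.Λ n - t) x
      + tpS ((Finset.range P.N).filter (fun n => ¬ sgnPM pos (P.Λ n) = 1)) P.c (fun n => P.Λ n - t) x) := by
  unfold tpS TrigPoly.eval
  rw [Finset.sum_filter_add_sum_filter_not, Finset.mul_sum]
  refine Finset.sum_congr rfl fun n _ => ?_
  rw [mul_left_comm, ← Complex.exp_add]
  push_cast
  ring_nf

lemma hilb_split (P : TrigPoly) (pos : Bool) (t x : ℝ) :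
    P.hilb pos x = -Complex.I * (Complex.exp (((t * x : ℝ) : ℂ) * Complex.I) *
      (tpS ((Finset.range P.N).filter (fun n => sgnPM pos (P.Λ n) = 1)) P.c (fun n => P.Λ n - t) x
      - tpS ((Finset.range P.N).filter (fun n => ¬ sgnPM pos (P.Λ n) = 1)) P.c (fun n => P.Λ n - t) x)) := by
  unfold tpS TrigPoly.hilb
  rw [← Finset.sum_filter_add_sum_filter_not _ (fun n => sgnPM pos (P.Λ n) = 1), mul_sub, mul_sub,
    Finset.mul_sum, Finset.mul_sum, Finset.mul_sum, Finset.mul_sum, sub_eq_add_neg, ← Finset.sum_neg_distrib]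
  have e : ∀ n, Complex.exp (Complex.I * (P.Λ n : ℂ) * (x : ℂ))
      = Complex.exp (((t * x : ℝ) : ℂ) * Complex.I) *
        Complex.exp (Complex.I * ((P.Λ n - t : ℝ) : ℂ) * (x : ℂ)) := by
    intro n
    rw [← Complex.exp_add]
    push_cast
    ring_nf
  congr 1
  · refine Finset.sum_congr rfl fun n hn => ?_
    rw [(Finset.mem_filter.1 hn).2, e n]
    push_cast; ring
  · refine Finset.sum_congr rfl fun n hn => ?_
    rw [(sgnPM_cases pos (P.Λ n)).resolve_left (Finset.mem_filter.1 hn).2, e n]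
    push_cast; ring

/-- Boundedness of the modified Hilbert transforms on `S^{2^k}`: for every `k ≥ 1` and `α > 0`
there is `C = C(k, α) > 0` with `‖H_± f‖_{S^{2^k}} ≤ C ‖f‖_{S^{2^k}}` for every `α`-separated
trigonometric polynomial `f`. -/
theorem stmt_10 (pos : Bool) (k : ℕ) (hk : 1 ≤ k) (α : ℝ) (hα : 0 < α) :
    ∃ C : ℝ, 0 < C ∧ ∀ P : TrigPoly, P.sep α →
      stepanovNorm ((2 : ℝ) ^ k) (fun s => ‖TrigPoly.hilb pos P s‖)
        ≤ C * stepanovNorm ((2 : ℝ) ^ k) (fun s => ‖P.eval s‖) := by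
  obtain ⟨j, rfl⟩ : ∃ j, k = j + 1 := ⟨k - 1, by omega⟩
  obtain ⟨C, hC, hB⟩ := Bd_all (α / 2) (by positivity) j
  refine ⟨C ^ (1 / (2:ℝ) ^ (j + 1)), by positivity, fun P hP => ?_⟩
  obtain ⟨t, hA, hBt⟩ := exists_cut P α hP pos
  set p : ℕ := 2 ^ (j + 1) with hp
  have hpc : (2:ℝ) ^ (j + 1) = (p : ℝ) := by rw [hp]; push_cast; rfl
  set u := tpS ((Finset.range P.N).filter (fun n => sgnPM pos (P.Λ n) = 1)) P.c (fun n => P.Λ n - t) with hu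
  set v := tpS ((Finset.range P.N).filter (fun n => ¬ sgnPM pos (P.Λ n) = 1)) P.c (fun n => P.Λ n - t) with hv
  have e1 : ∀ x, ‖P.eval x‖ = ‖u x + v x‖ := by
    intro x
    rw [eval_split P pos t x, norm_mul, Complex.norm_exp_ofReal_mul_I, one_mul]
  have e2 : ∀ x, ‖P.hilb pos x‖ = ‖u x - v x‖ := by
    intro x
    rw [hilb_split P pos t x, norm_mul, norm_mul, Complex.norm_exp_ofReal_mul_I, one_mul, norm_neg,
      Complex.norm_I, one_mul]
  unfold stepanovNorm
  simp_rw [e1, e2, hpc, abs_norm, Real.rpow_natCast]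
  have hcu : Continuous u := tpS_cont _ _ _
  have hcv : Continuous v := tpS_cont _ _ _
  set R := ∑ i ∈ (Finset.range P.N).filter (fun n => sgnPM pos (P.Λ n) = 1), ‖P.c i‖
    + ∑ i ∈ (Finset.range P.N).filter (fun n => ¬ sgnPM pos (P.Λ n) = 1), ‖P.c i‖
  have hR : ∀ y, ‖u y + v y‖ ≤ R :=
    fun y => (norm_add_le _ _).trans (add_le_add (tpS_bdd _ _ _ _) (tpS_bdd _ _ _ _))
  have hbdd : BddAbove (Set.range fun x : ℝ => ∫ y in x..(x + 1), ‖u y + v y‖ ^ p) := by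
    refine ⟨R ^ p, ?_⟩
    rintro _ ⟨x, rfl⟩
    calc ∫ y in x..(x + 1), ‖u y + v y‖ ^ p ≤ ∫ y in x..(x + 1), R ^ p := by
          refine intervalIntegral.integral_mono_on (by linarith) ?_ ?_ fun y _ => ?_
          · exact Continuous.intervalIntegrable (by fun_prop) _ _
          · exact Continuous.intervalIntegrable (by fun_prop) _ _
          · gcongr; exact hR y
      _ = _ := by simp
  set M := ⨆ x : ℝ, ∫ y in x..(x + 1), ‖u y + v y‖ ^ p
  have hM : ∀ x : ℝ, ∫ y in x..(x + 1), ‖u y + v y‖ ^ p ≤ M := fun x => le_ciSup hbdd x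
  have hnn : ∀ f : ℝ → ℂ, ∀ x : ℝ, 0 ≤ ∫ y in x..(x + 1), ‖f y‖ ^ p := fun f x =>
    intervalIntegral.integral_nonneg (by linarith) fun y _ => by positivity
  have hM0 : 0 ≤ M := (hnn (fun y => u y + v y) 0).trans (hM 0)
  have hfin := hB ℕ ℕ _ P.c _ hA _ P.c _ hBt M hM
  rw [← Real.mul_rpow hC.le hM0]
  refine Real.rpow_le_rpow (Real.iSup_nonneg fun x => hnn (fun y => u y - v y) x) (ciSup_le hfin) (by positivity)
end
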